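/- arXiv:1202.5218 — 2 statements merged into one kernel-verified Lean document; each statement's English description precedes it below -/
import Mathlib

section
/- (Integration of the exact modulation system, original time.) Let 0 < α < 1 and β∞ > 0, and let P₁, P₂ be as in the construction of the approximate solution (P₁ contains only monomials of total degree ≥ 3; P₂ = −2bβ̃ plus monomials of total degree ≥ 3). Then there exist a time t_e < 0 and a constant g∞ > 0 with |g∞ − 1| small, together with a solution (λ_e, b_e, β̃_e, r_e, γ_e) on [t_e, 0) of the system λ_s/λ + b = P₁(b,β̃), r_s/λ + 2β = 0, β̃_s = P₂(b,β̃), γ_s = 1 + β², ds/dt = 1/λ², b = (2β/α)·(λ/r), β = β∞ + β̃, satisfying as t ↑ 0: b_e(t) = (1/(1+α))·(2(1+α)β∞/(α g∞))^{2/(1+α)}·|t|^{(1−α)/(1+α)}·(1 + O(log(|t|)·|t|^{(1−α)/(1+α)})), λ_e(t) = (2(1+α)β∞/(α g∞))^{1/(1+α)}·|t|^{1/(1+α)}·(1 + O(log(|t|)·|t|^{(1−α)/(1+α)})), r_e(t) = g∞·(2(1+α)β∞/(α g∞))^{α/(1+α)}·|t|^{α/(1+α)}·(1 + O(log(|t|)·|t|^{(1−α)/(1+α)})),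 β̃_e(t) = O(|t|^{2(1−α)/(1+α)}), and γ_e(t) = (1+β∞²)·((1−α)/(1+α))^{(1−α)/(1+α)}·(2(1−α)β∞/(α g∞))^{−2/(1+α)}·|t|^{−(1−α)/(1+α)} + O(log(|t|)). -/
open Set

open Filter Topology Asymptotics
open scoped NNReal

/-- A bounded, globally Lipschitz, time-continuous vector field has a global integral curve. -/
theorem exists_global_hasDerivAt_of_lipschitz_of_bounded {E : Type*} [NormedAddCommGroup E]
    [NormedSpace ℝ E] [CompleteSpace E] {f : ℝ → E → E} {K L : ℝ≥0}
    (hlip : ∀ t, LipschitzWith K (f t)) (hcont : ∀ x, Continuous fun t => f t x)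
    (hbdd : ∀ t x, ‖f t x‖ ≤ L) (x₀ : E) :
    ∃ X : ℝ → E, X 0 = x₀ ∧ ∀ t, HasDerivAt X (f t (X t)) t := by
  have hloc : ∀ n : ℕ, ∃ Y : ℝ → E, Y 0 = x₀ ∧
      ∀ t ∈ Ioo (-((n : ℝ) + 1)) (n + 1), HasDerivAt Y (f t (Y t)) t := by
    intro n
    have hn : (0 : ℝ) ≤ n := n.cast_nonneg
    have hpl : IsPicardLindelof f (tmin := -((n : ℝ) + 1)) (tmax := n + 1)
        ⟨0, by constructor <;> linarith⟩ x₀ (L * (n + 1)) 0 L K :=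
      { lipschitzOnWith := fun t _ => (hlip t).lipschitzOnWith
        continuousOn := fun x _ => (hcont x).continuousOn
        norm_le := fun t _ x _ => hbdd t x
        mul_max_le := by simp }
    obtain ⟨Y, h0, hY⟩ := hpl.exists_eq_forall_mem_Icc_hasDerivWithinAt₀
    exact ⟨Y, h0, fun t ht =>
      (hY t (Ioo_subset_Icc_self ht)).hasDerivAt (Icc_mem_nhds ht.1 ht.2)⟩
  choose Y hY0 hY using hloc
  have hagree : ∀ m n : ℕ, m ≤ n → ∀ t ∈ Ioo (-((m : ℝ) + 1)) (m + 1), Y m t = Y n t := by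
    intro m n hmn
    have hm : (0 : ℝ) ≤ m := m.cast_nonneg
    have hmn' : (m : ℝ) ≤ n := by exact_mod_cast hmn
    exact ODE_solution_unique_of_mem_Ioo (v := f) (s := fun _ => univ) (K := K) (t₀ := 0)
      (fun t _ => (hlip t).lipschitzOnWith) (by constructor <;> linarith)
      (fun t ht => ⟨hY m t ht, trivial⟩)
      (fun t ht => ⟨hY n t ⟨by linarith [ht.1], by linarith [ht.2]⟩, trivial⟩)
      (by rw [hY0, hY0])
  refine ⟨fun t => Y ⌈|t|⌉₊ t, by simp [hY0], fun t => ?_⟩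
  obtain ⟨N, hN⟩ := exists_nat_gt (|t| + 1)
  have hev : (fun s => Y ⌈|s|⌉₊ s) =ᶠ[𝓝 t] Y N := by
    have : ∀ᶠ s in 𝓝 t, |s| < |t| + 1 :=
      (continuous_abs.tendsto t).eventually (gt_mem_nhds (by linarith))
    filter_upwards [this] with s hs
    have h1 : |s| ≤ ⌈|s|⌉₊ := Nat.le_ceil _
    refine hagree _ N (Nat.ceil_le.2 (by linarith)) s ?_
    constructor <;> linarith [neg_abs_le s, le_abs_self s]
  have ht : t ∈ Ioo (-((N : ℝ) + 1)) (N + 1) := by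
    constructor <;> linarith [neg_abs_le t, le_abs_self t]
  have := (hY N t ht).congr_of_eventuallyEq hev
  rwa [← hev.self_of_nhds] at this

/-- Increment bound for a function whose derivative decays exponentially. -/
theorem abs_sub_le_of_abs_deriv_le_exp {f f' : ℝ → ℝ} {a C c : ℝ} (hc : 0 < c)
    (hf : ∀ u, a ≤ u → HasDerivAt f (f' u) u)
    (hbd : ∀ u, a ≤ u → |f' u| ≤ C * Real.exp (-c * u)) {u w : ℝ} (hu : a ≤ u) (huw : u ≤ w) :
    |f w - f u| ≤ C / c * (Real.exp (-c * u) - Real.exp (-c * w)) := by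
  have key := image_norm_le_of_norm_deriv_right_le_deriv_boundary
    (f := fun x => f x - f u) (f' := f') (a := u) (b := w)
    (B := fun x => C / c * (Real.exp (-c * u) - Real.exp (-c * x)))
    (B' := fun x => C * Real.exp (-c * x))
    (fun x hx => ((hf x (hu.trans hx.1)).sub_const _).continuousAt.continuousWithinAt)
    (fun x hx => ((hf x (hu.trans hx.1)).sub_const _).hasDerivWithinAt)
    (by simp) ?_ (fun x hx => hbd x (hu.trans hx.1)) (right_mem_Icc.2 huw)
  · simpa using key
  · intro x
    have h1 : HasDerivAt (fun x => -c * x) (-c) x := by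
      simpa using (hasDerivAt_id x).const_mul (-c)
    refine (((hasDerivAt_const x _).sub h1.exp).const_mul (C / c)).congr_deriv ?_
    field_simp
    ring

/-- A function whose derivative decays exponentially converges at the same exponential rate. -/
theorem exists_limit_of_abs_deriv_le_exp {f f' : ℝ → ℝ} {a C c : ℝ} (hc : 0 < c)
    (hf : ∀ u, a ≤ u → HasDerivAt f (f' u) u)
    (hbd : ∀ u, a ≤ u → |f' u| ≤ C * Real.exp (-c * u)) :
    ∃ l : ℝ, Tendsto f atTop (𝓝 l) ∧ ∀ u, a ≤ u → |f u - l| ≤ C / c * Real.exp (-c * u) := by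
  have hC : 0 ≤ C := by
    have := (abs_nonneg _).trans (hbd a le_rfl)
    exact nonneg_of_mul_nonneg_left this (Real.exp_pos _)
  have hinc : ∀ u w, a ≤ u → u ≤ w → |f w - f u| ≤ C / c * Real.exp (-c * u) := by
    intro u w hu huw
    refine (abs_sub_le_of_abs_deriv_le_exp hc hf hbd hu huw).trans ?_
    have := Real.exp_pos (-c * w)
    gcongr
    linarith
  have hlim : Tendsto (fun u => C / c * Real.exp (-c * u)) atTop (𝓝 0) := by
    have : Tendsto (fun u : ℝ => -c * u) atTop atBot :=
      tendsto_id.const_mul_atTop_of_neg (by linarith)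
    simpa using (Real.tendsto_exp_atBot.comp this).const_mul (C / c)
  have hcau : CauchySeq f := by
    refine Metric.cauchySeq_iff'.2 fun ε hε => ?_
    obtain ⟨N, hN, haN⟩ :=
      ((hlim.eventually (gt_mem_nhds hε)).and (eventually_ge_atTop a)).exists
    exact ⟨N, fun n hn => (hinc N n haN hn).trans_lt hN⟩
  obtain ⟨l, hl⟩ := cauchySeq_tendsto_of_complete hcau
  refine ⟨l, hl, fun u hu => ?_⟩
  rw [abs_sub_comm]
  exact le_of_tendsto ((hl.sub_const (f u)).abs)
    ((eventually_ge_atTop u).mono fun w hw => hinc u w hu hw)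

/-- A planar system driven by a slowly decaying parameter `x = ε * exp (-c * u)`, whose first
component moves at speed `O(x²)` and whose second one is confined by inward-pointing boundary
values, has a solution that stays in the box `[1/2, 3/2] × [-M, M]` for all `u ≥ 0`. -/
theorem exists_trapped_solution {c M ε₀ C₁ : ℝ} (hc : 0 < c) (hM : 0 < M) (hε₀ : 0 < ε₀)
    {H : ℝ × ℝ × ℝ → ℝ × ℝ} {K : ℝ≥0}
    (hlip : LipschitzOnWith K H (Icc 0 ε₀ ×ˢ Icc (1 / 2) (3 / 2) ×ˢ Icc (-M) M))
    (hH₁ : ∀ x ∈ Icc 0 ε₀, ∀ B ∈ Icc (1 / 2 : ℝ) (3 / 2), ∀ v ∈ Icc (-M) M,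
      |(H (x, B, v)).1| ≤ C₁ * x ^ 2)
    (htop : ∀ x ∈ Icc 0 ε₀, ∀ B ∈ Icc (1 / 2 : ℝ) (3 / 2), (H (x, B, M)).2 < 0)
    (hbot : ∀ x ∈ Icc 0 ε₀, ∀ B ∈ Icc (1 / 2 : ℝ) (3 / 2), 0 < (H (x, B, -M)).2) :
    ∃ (ε : ℝ) (B v : ℝ → ℝ), 0 < ε ∧ ε ≤ ε₀ ∧ ∀ u, 0 ≤ u →
      B u ∈ Icc (1 / 2) (3 / 2) ∧ v u ∈ Icc (-M) M ∧
      HasDerivAt B (H (ε * Real.exp (-c * u), B u, v u)).1 u ∧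
      HasDerivAt v (H (ε * Real.exp (-c * u), B u, v u)).2 u := by
  have hC₁ : 0 ≤ C₁ := by
    have := (abs_nonneg _).trans
      (hH₁ ε₀ ⟨hε₀.le, le_rfl⟩ 1 (by norm_num) 0 ⟨by linarith, hM.le⟩)
    exact nonneg_of_mul_nonneg_left this (by positivity)
  obtain ⟨ε, hε, hεε₀, hεC⟩ : ∃ ε : ℝ, 0 < ε ∧ ε ≤ ε₀ ∧ C₁ * ε ^ 2 / (2 * c) ≤ 1 / 2 := by
    have hlim : Tendsto (fun ε : ℝ => C₁ * ε ^ 2 / (2 * c)) (𝓝[>] 0) (𝓝 0) := by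
      have : Continuous (fun ε : ℝ => C₁ * ε ^ 2 / (2 * c)) := by fun_prop
      simpa using this.continuousWithinAt (s := Ioi 0) (x := 0) |>.tendsto
    obtain ⟨ε, h1, h2, h3⟩ := ((hlim.eventually (gt_mem_nhds (by norm_num : (0 : ℝ) < 1 / 2))).and
      ((Ioc_mem_nhdsGT hε₀ : ∀ᶠ x in 𝓝[>] (0 : ℝ), x ∈ Ioc 0 ε₀))).exists
    exact ⟨ε, h2, h3, h1.le⟩
  have h13 : (1 / 2 : ℝ) ≤ 3 / 2 := by norm_num
  have hMM : -M ≤ M := by linarith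
  set X : ℝ → ℝ := fun u => ε * Real.exp (-c * max u 0) with hX
  have hXmem : ∀ u, X u ∈ Icc 0 ε₀ := by
    intro u
    refine ⟨by positivity, ?_⟩
    have : Real.exp (-c * max u 0) ≤ 1 := by
      rw [Real.exp_le_one_iff]
      nlinarith [le_max_right u 0]
    calc X u ≤ ε * 1 := by simp only [hX]; gcongr
      _ ≤ ε₀ := by linarith
  have hXeq : ∀ u, 0 ≤ u → X u = ε * Real.exp (-c * u) := fun u hu => by
    simp only [hX, max_eq_left hu]
  have hXc : Continuous X := by fun_prop
  set pr : ℝ × ℝ → ℝ × ℝ := fun p => (projIcc _ _ h13 p.1, projIcc _ _ hMM p.2) with hpr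
  have hprmem : ∀ p, pr p ∈ Icc (1 / 2 : ℝ) (3 / 2) ×ˢ Icc (-M) M :=
    fun p => ⟨(projIcc _ _ h13 p.1).2, (projIcc _ _ hMM p.2).2⟩
  have hprlip : LipschitzWith 1 pr := by
    have h1 : LipschitzWith 1 fun p : ℝ × ℝ => (projIcc _ _ h13 p.1 : ℝ) := by
      simpa [Function.comp_def] using LipschitzWith.subtype_val _ |>.comp
        ((LipschitzWith.projIcc h13).comp LipschitzWith.prod_fst)
    have h2 : LipschitzWith 1 fun p : ℝ × ℝ => (projIcc _ _ hMM p.2 : ℝ) := by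
      simpa [Function.comp_def] using LipschitzWith.subtype_val _ |>.comp
        ((LipschitzWith.projIcc hMM).comp LipschitzWith.prod_snd)
    simpa using h1.prodMk h2
  have hbox : ∀ u p, (X u, pr p) ∈ Icc 0 ε₀ ×ˢ Icc (1 / 2 : ℝ) (3 / 2) ×ˢ Icc (-M) M :=
    fun u p => ⟨hXmem u, hprmem p⟩
  obtain ⟨L, hL⟩ : ∃ L : ℝ, ∀ q ∈ Icc 0 ε₀ ×ˢ Icc (1 / 2 : ℝ) (3 / 2) ×ˢ Icc (-M) M, ‖H q‖ ≤ L :=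
    (isCompact_Icc.prod (isCompact_Icc.prod isCompact_Icc)).exists_bound_of_continuousOn
      hlip.continuousOn
  obtain ⟨Y, hY0, hY⟩ := exists_global_hasDerivAt_of_lipschitz_of_bounded
    (f := fun u p => H (X u, pr p)) (K := K) (L := L.toNNReal)
    (fun u => LipschitzWith.of_dist_le_mul fun p q => by
      refine (hlip.dist_le_mul _ (hbox u p) _ (hbox u q)).trans ?_
      gcongr
      rw [Prod.dist_eq]
      simpa using hprlip.dist_le_mul p q)
    (fun p => hlip.continuousOn.comp_continuous (by fun_prop) (fun u => hbox u p))
    (fun u p => (hL _ (hbox u p)).trans (Real.le_coe_toNNReal L)) ((1, 0) : ℝ × ℝ)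
  have hB : ∀ u, HasDerivAt (fun u => (Y u).1) (H (X u, pr (Y u))).1 u := fun u => (hY u).fst
  have hv : ∀ u, HasDerivAt (fun u => (Y u).2) (H (X u, pr (Y u))).2 u := fun u => (hY u).snd
  have hBmem : ∀ u, 0 ≤ u → (Y u).1 ∈ Icc (1 / 2 : ℝ) (3 / 2) := by
    intro u hu
    have := abs_sub_le_of_abs_deriv_le_exp (a := 0) (C := C₁ * ε ^ 2) (c := 2 * c) (by linarith)
      (fun u _ => hB u) (fun u hu => by
        refine (hH₁ _ (hXmem u) _ (hprmem (Y u)).1 _ (hprmem (Y u)).2).trans (le_of_eq ?_)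
        rw [hXeq u hu, mul_pow, ← Real.exp_nat_mul]
        push_cast
        ring_nf) le_rfl hu
    rw [hY0] at this
    have h2 : C₁ * ε ^ 2 / (2 * c) * (Real.exp (-(2 * c) * 0) - Real.exp (-(2 * c) * u))
        ≤ 1 / 2 * 1 := by
      have h3 := Real.exp_pos (-(2 * c) * u)
      have h4 : Real.exp (-(2 * c) * u) ≤ 1 := by
        rw [Real.exp_le_one_iff]; nlinarith
      rw [mul_zero, Real.exp_zero]
      gcongr
      linarith
    have := abs_le.1 (this.trans h2)
    constructor <;> linarith [this.1, this.2]
  have hvle : ∀ u, 0 ≤ u → (Y u).2 ≤ M := by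
    intro u hu
    refine image_le_of_deriv_right_lt_deriv_boundary (f := fun u => (Y u).2) (a := 0) (b := u)
      (B := fun _ => M) (B' := fun _ => 0)
      (fun x _ => (hv x).continuousAt.continuousWithinAt) (fun x _ => (hv x).hasDerivWithinAt)
      (by simp [hY0, hM.le]) (fun x => hasDerivAt_const x M) ?_ (right_mem_Icc.2 hu)
    intro x _ hx
    have : pr (Y x) = ((pr (Y x)).1, M) := by
      simp only [hpr]
      rw [projIcc_of_right_le hMM hx.ge]
    rw [this]
    exact htop _ (hXmem x) _ (hprmem (Y x)).1
  have hvge : ∀ u, 0 ≤ u → -M ≤ (Y u).2 := by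
    intro u hu
    have := image_le_of_deriv_right_lt_deriv_boundary (f := fun u => -(Y u).2) (a := 0) (b := u)
      (B := fun _ => M) (B' := fun _ => 0)
      (fun x _ => (hv x).neg.continuousAt.continuousWithinAt)
      (fun x _ => (hv x).neg.hasDerivWithinAt)
      (by simp [hY0, hM.le]) (fun x => hasDerivAt_const x M) ?_ (right_mem_Icc.2 hu)
    · linarith
    intro x _ hx
    have : pr (Y x) = ((pr (Y x)).1, -M) := by
      simp only [hpr]
      rw [projIcc_of_le_left hMM (by linarith)]
    rw [this]
    have := hbot _ (hXmem x) _ (hprmem (Y x)).1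
    linarith
  refine ⟨ε, fun u => (Y u).1, fun u => (Y u).2, hε, hεε₀, fun u hu => ?_⟩
  have hBu := hBmem u hu
  have hvu : (Y u).2 ∈ Icc (-M) M := ⟨hvge u hu, hvle u hu⟩
  have hpru : pr (Y u) = ((Y u).1, (Y u).2) := by
    simp only [hpr]
    rw [projIcc_of_mem h13 hBu, projIcc_of_mem hMM hvu]
  have h1 := hB u
  have h2 := hv u
  rw [hpru, hXeq u hu] at h1 h2
  exact ⟨hBu, hvu, h1, h2⟩

/-- The cofactor of `x ^ 3` in `∑ c j l * (x * B) ^ j * (x * z) ^ l`, the sum being taken over the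
monomials of total degree between `3` and `k - 1`. -/
noncomputable def cubicCofactor (k : ℕ) (c : ℕ → ℕ → ℝ) (x B z : ℝ) : ℝ :=
  ∑ j ∈ Finset.range k, ∑ l ∈ Finset.range k,
    if 3 ≤ j + l ∧ j + l ≤ k - 1 then c j l * x ^ (j + l - 3) * B ^ j * z ^ l else 0

theorem sum_eq_cube_mul_cubicCofactor (k : ℕ) (c : ℕ → ℕ → ℝ) (x B z : ℝ) :
    (∑ j ∈ Finset.range k, ∑ l ∈ Finset.range k,
      if 3 ≤ j + l ∧ j + l ≤ k - 1 then c j l * (x * B) ^ j * (x * z) ^ l else 0) =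
      x ^ 3 * cubicCofactor k c x B z := by
  simp only [cubicCofactor, Finset.mul_sum]
  refine Finset.sum_congr rfl fun j _ => Finset.sum_congr rfl fun l _ => ?_
  split_ifs with h
  · have : x ^ j * x ^ l = x ^ 3 * x ^ (j + l - 3) := by
      rw [← pow_add, ← pow_add]
      congr 1
      omega
    calc c j l * (x * B) ^ j * (x * z) ^ l = c j l * (x ^ j * x ^ l) * B ^ j * z ^ l := by ring
      _ = _ := by rw [this]; ring
  · simp

theorem contDiff_cubicCofactor (k : ℕ) (c : ℕ → ℕ → ℝ) :
    ContDiff ℝ 1 fun p : ℝ × ℝ × ℝ => cubicCofactor k c p.1 p.2.1 p.2.2 := by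
  unfold cubicCofactor
  refine ContDiff.sum fun j _ => ContDiff.sum fun l _ => ?_
  split_ifs
  · fun_prop
  · fun_prop

/-- The modulation equations for `(b, β̃)` in the variable `u` with `du = b ds` have a solution
defined near `u = +∞`, normalised so that `b ∼ (2 β∞ / α) exp (-(1 - α) u)`. -/
theorem exists_reduced_solution {α βinf : ℝ} (hα0 : 0 < α) (hα1 : α < 1) (hβ : 0 < βinf)
    {k : ℕ} {c₁ c₂ : ℕ → ℕ → ℝ} {P₁ P₂ : ℝ → ℝ → ℝ}
    (hP₁ : ∀ b bt : ℝ, P₁ b bt =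
      ∑ j ∈ Finset.range k, ∑ l ∈ Finset.range k,
        if 3 ≤ j + l ∧ j + l ≤ k - 1 then c₁ j l * b ^ j * bt ^ l else 0)
    (hP₂ : ∀ b bt : ℝ, P₂ b bt = -2 * b * bt +
      ∑ j ∈ Finset.range k, ∑ l ∈ Finset.range k,
        if 3 ≤ j + l ∧ j + l ≤ k - 1 then c₂ j l * b ^ j * bt ^ l else 0) :
    ∃ (u₀ C : ℝ) (b z : ℝ → ℝ), ∀ u, u₀ ≤ u →
      0 < b u ∧ 0 < βinf + z u ∧
      HasDerivAt b (-(1 - α) * b u + P₁ (b u) (z u) + P₂ (b u) (z u) / (βinf + z u)) u ∧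
      HasDerivAt z (P₂ (b u) (z u) / b u) u ∧
      |b u - 2 * βinf / α * Real.exp (-(1 - α) * u)| ≤ C * Real.exp (-(1 - α) * u) ^ 3 ∧
      |z u| ≤ C * Real.exp (-(1 - α) * u) ^ 2 := by
  set c : ℝ := 1 - α with hcdef
  have hc : 0 < c := by linarith
  obtain ⟨C₀, hC₀⟩ : ∃ C₀ : ℝ, ∀ q ∈ Icc (0 : ℝ) 1 ×ˢ Icc (1 / 2 : ℝ) (3 / 2) ×ˢ Icc (-1 : ℝ) 1,
      ‖cubicCofactor k c₂ q.1 q.2.1 q.2.2‖ ≤ C₀ :=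
    (isCompact_Icc.prod (isCompact_Icc.prod isCompact_Icc)).exists_bound_of_continuousOn
      (contDiff_cubicCofactor k c₂).continuous.continuousOn
  have hC₀0 : 0 ≤ C₀ := (norm_nonneg _).trans
    (hC₀ (0, 1, 0) ⟨by norm_num, by norm_num, by norm_num⟩)
  set M : ℝ := C₀ / α + 1 with hMdef
  have hM : 0 < M := by positivity
  have hαM : α * M = C₀ + α := by rw [hMdef]; field_simp
  set ε₀ : ℝ := min 1 (min (1 / M) (βinf / (2 * M))) with hε₀def
  have hε₀ : 0 < ε₀ := by positivity
  have hε₀1 : ε₀ ≤ 1 := min_le_left _ _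
  have hε₀M : ε₀ * M ≤ 1 := by
    have : ε₀ ≤ 1 / M := (min_le_right _ _).trans (min_le_left _ _)
    rwa [le_div_iff₀ hM] at this
  have hε₀β : ε₀ * M ≤ βinf / 2 := by
    have : ε₀ ≤ βinf / (2 * M) := (min_le_right _ _).trans (min_le_right _ _)
    rw [le_div_iff₀ (by positivity)] at this
    linarith
  have hxv : ∀ x ∈ Icc 0 ε₀, ∀ v ∈ Icc (-M) M, |x * v| ≤ ε₀ * M := by
    intro x hx v hv
    rw [abs_mul, abs_of_nonneg hx.1]
    exact mul_le_mul hx.2 (abs_le.2 hv) (abs_nonneg _) hε₀.le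
  have hxxv : ∀ x ∈ Icc 0 ε₀, ∀ v ∈ Icc (-M) M, |x * (x * v)| ≤ βinf / 2 := by
    intro x hx v hv
    rw [abs_mul, abs_of_nonneg hx.1]
    calc x * |x * v| ≤ 1 * (ε₀ * M) :=
          mul_le_mul (hx.2.trans hε₀1) (hxv x hx v hv) (abs_nonneg _) zero_le_one
      _ ≤ βinf / 2 := by linarith
  have hden : ∀ x ∈ Icc 0 ε₀, ∀ v ∈ Icc (-M) M, 0 < βinf + x * (x * v) := by
    intro x hx v hv
    have := (abs_le.1 (hxxv x hx v hv)).1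
    linarith
  have hS₂ : ∀ x ∈ Icc 0 ε₀, ∀ B ∈ Icc (1 / 2 : ℝ) (3 / 2), ∀ v ∈ Icc (-M) M,
      |cubicCofactor k c₂ x B (x * v) / B| ≤ 2 * C₀ := by
    intro x hx B hB v hv
    have hB0 : (0 : ℝ) < B := by linarith [hB.1]
    have h1 := hC₀ (x, B, x * v)
      ⟨⟨hx.1, hx.2.trans hε₀1⟩, hB, abs_le.1 ((hxv x hx v hv).trans hε₀M)⟩
    rw [abs_div, abs_of_pos hB0, div_le_iff₀ hB0]
    rw [Real.norm_eq_abs] at h1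
    nlinarith [hB.1]
  set G : ℝ × ℝ × ℝ → ℝ := fun p => cubicCofactor k c₁ p.1 p.2.1 (p.1 * p.2.2) +
    (-2 * p.2.1 * p.2.2 + cubicCofactor k c₂ p.1 p.2.1 (p.1 * p.2.2)) /
      (βinf + p.1 * (p.1 * p.2.2)) with hG
  set H : ℝ × ℝ × ℝ → ℝ × ℝ := fun p => (p.1 ^ 2 * G p,
    -2 * α * p.2.2 + cubicCofactor k c₂ p.1 p.2.1 (p.1 * p.2.2) / p.2.1) with hH
  set box : Set (ℝ × ℝ × ℝ) := Icc 0 ε₀ ×ˢ Icc (1 / 2) (3 / 2) ×ˢ Icc (-M) M with hbox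
  have hboxc : IsCompact box := isCompact_Icc.prod (isCompact_Icc.prod isCompact_Icc)
  have hboxconv : Convex ℝ box := (convex_Icc _ _).prod ((convex_Icc _ _).prod (convex_Icc _ _))
  have hcof : ∀ c' : ℕ → ℕ → ℝ, ContDiff ℝ 1
      fun p : ℝ × ℝ × ℝ => cubicCofactor k c' p.1 p.2.1 (p.1 * p.2.2) := fun c' =>
    (contDiff_cubicCofactor k c').comp
      (by fun_prop : ContDiff ℝ 1 fun p : ℝ × ℝ × ℝ => (p.1, p.2.1, p.1 * p.2.2))
  have hGdiff : ContDiffOn ℝ 1 G box := by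
    refine (hcof c₁).contDiffOn.add (ContDiffOn.div ?_ (by fun_prop) ?_)
    · exact (ContDiff.add (by fun_prop) (hcof c₂)).contDiffOn
    · exact fun p hp => (hden p.1 hp.1 p.2.2 hp.2.2).ne'
  have hHdiff : ContDiffOn ℝ 1 H box := by
    refine ContDiffOn.prodMk (ContDiffOn.mul (by fun_prop) hGdiff)
      (ContDiffOn.add (by fun_prop) (ContDiffOn.div (hcof c₂).contDiffOn (by fun_prop) ?_))
    intro p hp
    have : (1 / 2 : ℝ) ≤ p.2.1 := hp.2.1.1
    linarith
  obtain ⟨K, hK⟩ := hHdiff.exists_lipschitzOnWith one_ne_zero hboxconv hboxc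
  obtain ⟨C₁, hC₁⟩ := hboxc.exists_bound_of_continuousOn hGdiff.continuousOn
  have hH₁ : ∀ x ∈ Icc 0 ε₀, ∀ B ∈ Icc (1 / 2 : ℝ) (3 / 2), ∀ v ∈ Icc (-M) M,
      |(H (x, B, v)).1| ≤ C₁ * x ^ 2 := by
    intro x hx B hB v hv
    have h1 := hC₁ (x, B, v) ⟨hx, hB, hv⟩
    rw [Real.norm_eq_abs] at h1
    simp only [hH]
    rw [abs_mul, abs_of_nonneg (sq_nonneg x), mul_comm]
    gcongr
  obtain ⟨ε, B, v, hε, hεε₀, hsol⟩ := exists_trapped_solution hc hM hε₀ hK hH₁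
    (fun x hx B hB => by
      have := (abs_le.1 (hS₂ x hx B hB M ⟨by linarith, le_rfl⟩)).2
      simp only [hH]
      nlinarith)
    (fun x hx B hB => by
      have := (abs_le.1 (hS₂ x hx B hB (-M) ⟨le_rfl, by linarith⟩)).1
      simp only [hH]
      nlinarith)
  set X : ℝ → ℝ := fun u => ε * Real.exp (-c * u) with hX
  have hXpos : ∀ u, 0 < X u := fun u => by positivity
  have hXmem : ∀ u, 0 ≤ u → X u ∈ Icc 0 ε₀ := by
    intro u hu
    refine ⟨(hXpos u).le, ?_⟩
    have : Real.exp (-c * u) ≤ 1 := by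
      rw [Real.exp_le_one_iff]
      nlinarith
    simp only [hX]
    nlinarith
  have hXd : ∀ u, HasDerivAt X (-c * X u) u := by
    intro u
    have h1 : HasDerivAt (fun x => -c * x) (-c) u := by
      simpa using (hasDerivAt_id u).const_mul (-c)
    exact (h1.exp.const_mul ε).congr_deriv (by simp only [hX]; ring)
  obtain ⟨Binf, hBlim, hBrate⟩ := exists_limit_of_abs_deriv_le_exp (a := 0)
    (C := C₁ * ε ^ 2) (c := 2 * c) (by linarith)
    (fun u hu => (hsol u hu).2.2.1) (fun u hu => by
      refine (hH₁ _ (hXmem u hu) _ (hsol u hu).1 _ (hsol u hu).2.1).trans (le_of_eq ?_)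
      simp only [hX]
      rw [mul_pow, ← Real.exp_nat_mul]
      push_cast
      ring_nf)
  have hBinf : 0 < Binf := by
    have : (1 / 2 : ℝ) ≤ Binf := ge_of_tendsto hBlim
      ((eventually_ge_atTop 0).mono fun u hu => (hsol u hu).1.1)
    linarith
  have hderiv : ∀ u, 0 ≤ u →
      HasDerivAt (fun u => X u * B u) (-c * (X u * B u) + P₁ (X u * B u) (X u * (X u * v u)) +
        P₂ (X u * B u) (X u * (X u * v u)) / (βinf + X u * (X u * v u))) u ∧
      HasDerivAt (fun u => X u * (X u * v u))
        (P₂ (X u * B u) (X u * (X u * v u)) / (X u * B u)) u := by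
    intro u hu
    obtain ⟨hBu, hvu, hB', hv'⟩ := hsol u hu
    have hB0 : B u ≠ 0 := by linarith [hBu.1]
    have hx0 : X u ≠ 0 := (hXpos u).ne'
    have hd := (hden _ (hXmem u hu) _ hvu).ne'
    rw [hP₁, hP₂, sum_eq_cube_mul_cubicCofactor, sum_eq_cube_mul_cubicCofactor]
    constructor
    · refine ((hXd u).mul hB').congr_deriv ?_
      simp only [hH, hG]
      change _ * B u + X u * (X u ^ 2 * (cubicCofactor k c₁ (X u) (B u) (X u * v u) +
        (-2 * B u * v u + cubicCofactor k c₂ (X u) (B u) (X u * v u)) /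
          (βinf + X u * (X u * v u)))) = _
      field_simp
      ring
    · refine ((hXd u).mul ((hXd u).mul hv')).congr_deriv ?_
      simp only [hH]
      change -c * X u * (X u * v u) + X u * (-c * X u * v u + X u * (-2 * α * v u +
        cubicCofactor k c₂ (X u) (B u) (X u * v u) / B u)) = _
      field_simp
      rw [hcdef]
      ring
  set s : ℝ := Real.log (2 * βinf / (α * ε * Binf)) / c with hs
  set q : ℝ := Real.exp (c * s) with hq
  have hq0 : 0 < q := Real.exp_pos _
  have hqeq : ε * Binf * q = 2 * βinf / α := by
    have : c * s = Real.log (2 * βinf / (α * ε * Binf)) := by rw [hs]; field_simp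
    rw [hq, this, Real.exp_log (by positivity)]
    field_simp
  have hexp : ∀ u, Real.exp (-c * (u - s)) = q * Real.exp (-c * u) := by
    intro u
    rw [hq, ← Real.exp_add]
    ring_nf
  have hC₁0 : 0 ≤ C₁ := (norm_nonneg _).trans
    (hC₁ (0, 1, 0) ⟨⟨le_rfl, hε₀.le⟩, by norm_num, by constructor <;> linarith⟩)
  refine ⟨s, C₁ * ε ^ 3 / (2 * c) * q ^ 3 + ε ^ 2 * M * q ^ 2, fun u => X (u - s) * B (u - s),
    fun u => X (u - s) * (X (u - s) * v (u - s)), fun u hu => ?_⟩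
  have hus : 0 ≤ u - s := by linarith
  obtain ⟨hBu, hvu, -, -⟩ := hsol _ hus
  have hXu : X (u - s) = ε * (q * Real.exp (-c * u)) := by simp only [hX]; rw [hexp]
  have hE : 0 < Real.exp (-c * u) := Real.exp_pos _
  refine ⟨mul_pos (hXpos _) (by linarith [hBu.1]), hden _ (hXmem _ hus) _ hvu,
    (hderiv _ hus).1.comp_sub_const u s, (hderiv _ hus).2.comp_sub_const u s, ?_, ?_⟩
  · have h1 := hBrate _ hus
    have h2 : Real.exp (-(2 * c) * (u - s)) = (q * Real.exp (-c * u)) ^ 2 := by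
      rw [← hexp, ← Real.exp_nat_mul]
      push_cast
      ring_nf
    rw [h2] at h1
    have h3 : X (u - s) * B (u - s) - 2 * βinf / α * Real.exp (-c * u) =
        X (u - s) * (B (u - s) - Binf) := by
      rw [hXu, ← hqeq]; ring
    rw [h3, abs_mul, abs_of_pos (hXpos _)]
    calc X (u - s) * |B (u - s) - Binf|
        ≤ X (u - s) * (C₁ * ε ^ 2 / (2 * c) * (q * Real.exp (-c * u)) ^ 2) := by
          have := hXpos (u - s)
          gcongr
      _ = C₁ * ε ^ 3 / (2 * c) * q ^ 3 * Real.exp (-c * u) ^ 3 := by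
          rw [hXu]; ring
      _ ≤ _ := by
          gcongr
          have : 0 ≤ ε ^ 2 * M * q ^ 2 := by positivity
          linarith
  · rw [abs_mul (X _), abs_mul (X _), abs_of_pos (hXpos _)]
    calc X (u - s) * (X (u - s) * |v (u - s)|) ≤ X (u - s) * (X (u - s) * M) := by
          have := hXpos (u - s)
          have := abs_le.2 hvu
          gcongr
      _ = ε ^ 2 * M * q ^ 2 * Real.exp (-c * u) ^ 2 := by rw [hXu]; ring
      _ ≤ _ := by
          gcongr
          have : 0 ≤ C₁ * ε ^ 3 / (2 * c) * q ^ 3 := by positivity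
          linarith

theorem isBigO_mul_sub_one {ι : Type*} {l : Filter ι} {f g w : ι → ℝ}
    (hf : (fun u => f u - 1) =O[l] w) (hg : (fun u => g u - 1) =O[l] w)
    (hw : Tendsto w l (𝓝 0)) : (fun u => f u * g u - 1) =O[l] w := by
  have hg1 : g =O[l] fun _ => (1 : ℝ) := by
    have : Tendsto g l (𝓝 1) := by simpa using (hg.trans_tendsto hw).add_const 1
    exact this.isBigO_one ℝ
  have h1 : (fun u => (f u - 1) * g u) =O[l] w := by simpa using hf.mul hg1
  refine (h1.add hg).congr_left fun u => ?_
  ring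

theorem isBigO_rpow_sub_one {ι : Type*} {l : Filter ι} {f w : ι → ℝ} (p : ℝ)
    (hf : (fun u => f u - 1) =O[l] w) (hw : Tendsto w l (𝓝 0)) :
    (fun u => f u ^ p - 1) =O[l] w := by
  have hf1 : Tendsto f l (𝓝 1) := by simpa using (hf.trans_tendsto hw).add_const 1
  have hd : DifferentiableAt ℝ (fun x : ℝ => x ^ p) 1 :=
    (Real.hasDerivAt_rpow_const (Or.inl one_ne_zero)).differentiableAt
  have := hd.isBigO_sub.comp_tendsto hf1
  simp only [Function.comp_def, Real.one_rpow] at this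
  exact this.trans hf

theorem exists_hasDerivAt_of_continuousOn_Ici {g : ℝ → ℝ} {a : ℝ} (hg : ContinuousOn g (Ici a)) :
    ∃ F : ℝ → ℝ, ∀ u, a ≤ u → HasDerivAt F (g u) u := by
  have hc : Continuous fun u => g (max u a) :=
    hg.comp_continuous (by fun_prop) fun u => le_max_right u a
  refine ⟨fun u => ∫ s in a..u, g (max s a), fun u hu => ?_⟩
  have := intervalIntegral.integral_hasDerivAt_right (hc.intervalIntegrable a u)
    hc.aestronglyMeasurable.stronglyMeasurableAtFilter hc.continuousAt
  rwa [max_eq_left hu] at this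

/-- A function with positive derivative on `[a, ∞)` and limit `0` at `+∞` has a differentiable
inverse on `(T a, 0)`. -/
theorem exists_inverse_of_deriv_pos_of_tendsto_zero {T h : ℝ → ℝ} {a : ℝ}
    (hT : ∀ u, a ≤ u → HasDerivAt T (h u) u) (hpos : ∀ u, a ≤ u → 0 < h u)
    (hlim : Tendsto T atTop (𝓝 0)) :
    StrictMonoOn T (Ici a) ∧ (∀ u, a ≤ u → T u < 0) ∧ ∃ U : ℝ → ℝ, ∀ t ∈ Ioo (T a) 0,
      a < U t ∧ T (U t) = t ∧ HasDerivAt U (h (U t))⁻¹ t := by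
  have hcont : ContinuousOn T (Ici a) := fun u hu => (hT u hu).continuousAt.continuousWithinAt
  have hmono : StrictMonoOn T (Ici a) := by
    refine strictMonoOn_of_deriv_pos (convex_Ici a) hcont fun u hu => ?_
    have hu' : a ≤ u := interior_subset hu
    rw [(hT u hu').deriv]
    exact hpos u hu'
  have hneg : ∀ u, a ≤ u → T u < 0 := by
    intro u hu
    have h1 : T u < T (u + 1) := hmono hu (by simp only [mem_Ici]; linarith) (by linarith)
    refine h1.trans_le (ge_of_tendsto hlim ?_)
    filter_upwards [eventually_ge_atTop (u + 1)] with w hw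
    exact hmono.monotoneOn (by simp only [mem_Ici]; linarith) (by simp only [mem_Ici]; linarith) hw
  have hsurj : ∀ t ∈ Ioo (T a) 0, ∃ u ∈ Ioi a, T u = t := by
    intro t ht
    obtain ⟨w, hw, haw⟩ :=
      ((hlim.eventually (lt_mem_nhds ht.2)).and (eventually_ge_atTop a)).exists
    obtain ⟨u, hu, hut⟩ := intermediate_value_Ioo haw (hcont.mono Icc_subset_Ici_self)
      ⟨ht.1, hw⟩
    exact ⟨u, hu.1, hut⟩
  set U : ℝ → ℝ := Function.invFunOn T (Ioi a) with hU
  have hUmem : ∀ t ∈ Ioo (T a) 0, a < U t := fun t ht => Function.invFunOn_mem (hsurj t ht)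
  have hTU : ∀ t ∈ Ioo (T a) 0, T (U t) = t := fun t ht => Function.invFunOn_eq (hsurj t ht)
  have hUmono : MonotoneOn U (Ioo (T a) 0) := by
    intro s hs t ht hst
    rw [← hmono.le_iff_le (hUmem s hs).le (hUmem t ht).le, hTU s hs, hTU t ht]
    exact hst
  have hUimage : Ioi a ⊆ U '' Ioo (T a) 0 := by
    intro u hu
    have hu' : u ∈ Ici a := Ioi_subset_Ici_self hu
    have hmem : T u ∈ Ioo (T a) 0 := ⟨hmono self_mem_Ici hu' hu, hneg u hu'⟩
    exact ⟨T u, hmem, hmono.injOn (hUmem _ hmem).le hu' (hTU _ hmem)⟩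
  refine ⟨hmono, hneg, U, fun t ht => ⟨hUmem t ht, hTU t ht, ?_⟩⟩
  have hnhds := Ioo_mem_nhds ht.1 ht.2
  have hUc : ContinuousAt U t := continuousAt_of_monotoneOn_of_image_mem_nhds hUmono hnhds
    (mem_of_superset (Ioi_mem_nhds (hUmem t ht)) hUimage)
  exact (hT _ (hUmem t ht).le).of_local_left_inverse hUc (hpos _ (hUmem t ht).le).ne'
    (mem_of_superset hnhds hTU)

/-- Time and phase along a curve `(b, z)` parametrised by `u`, with `r = exp (-α u)` and
`λ = α b r / (2 (β∞ + z))`, together with the asymptotics of all the quantities in terms of the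
time `T u < 0`. -/
theorem exists_time_phase_asymptotics {α βinf u₀ C : ℝ} (hα0 : 0 < α) (hα1 : α < 1)
    (hβ : 0 < βinf) {b z lam : ℝ → ℝ} (hbc : ContinuousOn b (Ici u₀))
    (hzc : ContinuousOn z (Ici u₀)) (hb : ∀ u, u₀ ≤ u → 0 < b u)
    (hz : ∀ u, u₀ ≤ u → 0 < βinf + z u)
    (hlam : ∀ u, lam u = α * b u * Real.exp (-α * u) / (2 * (βinf + z u)))
    (hbas : ∀ u, u₀ ≤ u →
      |b u - 2 * βinf / α * Real.exp (-(1 - α) * u)| ≤ C * Real.exp (-(1 - α) * u) ^ 3)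
    (hzas : ∀ u, u₀ ≤ u → |z u| ≤ C * Real.exp (-(1 - α) * u) ^ 2) :
    ∃ T G : ℝ → ℝ, Tendsto T atTop (𝓝 0) ∧
      (∀ u, u₀ ≤ u → HasDerivAt T (lam u ^ 2 / b u) u) ∧
      (∀ u, u₀ ≤ u → HasDerivAt G ((1 + (βinf + z u) ^ 2) / b u) u) ∧
      (fun u => b u - 1 / (1 + α) * (2 * (1 + α) * βinf / (α * 1)) ^ (2 / (1 + α))
          * |T u| ^ ((1 - α) / (1 + α))) =O[atTop]
        (fun u => |T u| ^ ((1 - α) / (1 + α)) * |Real.log (abs (T u))| * |T u| ^ ((1 - α) / (1 + α))) ∧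
      (fun u => lam u - (2 * (1 + α) * βinf / (α * 1)) ^ (1 / (1 + α))
          * |T u| ^ (1 / (1 + α))) =O[atTop]
        (fun u => |T u| ^ (1 / (1 + α)) * |Real.log (abs (T u))| * |T u| ^ ((1 - α) / (1 + α))) ∧
      (fun u => Real.exp (-α * u) - 1 * (2 * (1 + α) * βinf / (α * 1)) ^ (α / (1 + α))
          * |T u| ^ (α / (1 + α))) =O[atTop]
        (fun u => |T u| ^ (α / (1 + α)) * |Real.log (abs (T u))| * |T u| ^ ((1 - α) / (1 + α))) ∧
      z =O[atTop] (fun u => |T u| ^ (2 * (1 - α) / (1 + α))) ∧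
      (fun u => G u - (1 + βinf ^ 2) * ((1 - α) / (1 + α)) ^ ((1 - α) / (1 + α))
          * (2 * (1 - α) * βinf / (α * 1)) ^ (-2 / (1 + α))
          * |T u| ^ (-(1 - α) / (1 + α))) =O[atTop] (fun u => 1 + |Real.log (abs (T u))|) := by
  have hc : 0 < 1 - α := by linarith
  have hα1' : 0 < 1 + α := by linarith
  set X : ℝ → ℝ := fun u => Real.exp (-(1 - α) * u) with hX
  set Y : ℝ → ℝ := fun u => Real.exp (-(1 + α) * u) with hY
  have hXpos : ∀ u, 0 < X u := fun u => Real.exp_pos _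
  have hYpos : ∀ u, 0 < Y u := fun u => Real.exp_pos _
  set K : ℝ := 2 * (1 + α) * βinf / α with hK
  have hK0 : 0 < K := by positivity
  set q : ℝ := (1 - α) / (1 + α) with hq
  have hq0 : 0 < q := by positivity
  have hexpneg : ∀ {a : ℝ}, 0 < a → Tendsto (fun u => Real.exp (-a * u)) atTop (𝓝 0) := fun ha =>
    Real.tendsto_exp_atBot.comp (tendsto_id.const_mul_atTop_of_neg (by linarith))
  have hX0 : Tendsto X atTop (𝓝 0) := hexpneg hc
  have hw : Tendsto (fun u => X u ^ 2) atTop (𝓝 0) := by simpa using hX0.pow 2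
  have hge := eventually_ge_atTop u₀
  -- relative sizes
  set fb : ℝ → ℝ := fun u => b u / (2 * βinf / α * X u) with hfb
  set fβ : ℝ → ℝ := fun u => (βinf + z u) / βinf with hfβ
  have hfb1 : (fun u => fb u - 1) =O[atTop] fun u => X u ^ 2 := by
    refine IsBigO.of_bound (C / (2 * βinf / α)) ?_
    filter_upwards [hge] with u hu
    have h1 := hbas u hu
    have hx := hXpos u
    have h2 : fb u - 1 = (b u - 2 * βinf / α * X u) / (2 * βinf / α * X u) := by
      simp only [hfb]; field_simp
    rw [h2, Real.norm_eq_abs, Real.norm_eq_abs, abs_div, abs_of_pos (by positivity : 0 < X u ^ 2),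
      abs_of_pos (by positivity : 0 < 2 * βinf / α * X u), div_le_iff₀ (by positivity)]
    refine h1.trans (le_of_eq ?_)
    change C * X u ^ 3 = _
    field_simp
  have hzO : z =O[atTop] fun u => X u ^ 2 := by
    refine IsBigO.of_bound C ?_
    filter_upwards [hge] with u hu
    rw [Real.norm_eq_abs, Real.norm_eq_abs, abs_of_pos (pow_pos (hXpos u) 2)]
    exact hzas u hu
  have hfβ1 : (fun u => fβ u - 1) =O[atTop] fun u => X u ^ 2 := by
    refine (hzO.const_mul_left βinf⁻¹).congr_left fun u => ?_
    simp only [hfβ]; field_simp; ring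
  have hfβinv : (fun u => (fβ u)⁻¹ - 1) =O[atTop] fun u => X u ^ 2 := by
    simpa [Real.rpow_neg_one] using isBigO_rpow_sub_one (-1) hfβ1 hw
  have hfbinv : (fun u => (fb u)⁻¹ - 1) =O[atTop] fun u => X u ^ 2 := by
    simpa [Real.rpow_neg_one] using isBigO_rpow_sub_one (-1) hfb1 hw
  have hlam1 : (fun u => fb u * (fβ u)⁻¹ - 1) =O[atTop] fun u => X u ^ 2 :=
    isBigO_mul_sub_one hfb1 hfβinv hw
  have hh1 : (fun u => fb u * (fβ u)⁻¹ * (fβ u)⁻¹ - 1) =O[atTop] fun u => X u ^ 2 :=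
    isBigO_mul_sub_one hlam1 hfβinv hw
  have hlameq : ∀ u, u₀ ≤ u → lam u = Real.exp (-u) * (fb u * (fβ u)⁻¹) := by
    intro u hu
    have h1 := (hz u hu).ne'
    have h2 := (hXpos u).ne'
    have h3 : Real.exp (-u) = Real.exp (-α * u) * X u := by
      simp only [hX]; rw [← Real.exp_add]; ring_nf
    rw [hlam, h3]
    simp only [hfb, hfβ]
    field_simp
  have hheq : ∀ u, u₀ ≤ u →
      lam u ^ 2 / b u = α / (2 * βinf) * Y u * (fb u * (fβ u)⁻¹ * (fβ u)⁻¹) := by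
    intro u hu
    have h1 := (hz u hu).ne'
    have h2 := (hXpos u).ne'
    have h3 : Y u = Real.exp (-α * u) * Real.exp (-α * u) * X u := by
      simp only [hX, hY]; rw [← Real.exp_add, ← Real.exp_add]; ring_nf
    have h4 := (hb u hu).ne'
    rw [hlam, h3]
    simp only [hfb, hfβ]
    field_simp
  -- the time
  have hlamc : ContinuousOn lam (Ici u₀) := by
    have : ContinuousOn (fun u => α * b u * Real.exp (-α * u) / (2 * (βinf + z u))) (Ici u₀) :=
      ContinuousOn.div (by fun_prop) (by fun_prop) fun u hu => (mul_pos two_pos (hz u hu)).ne'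
    exact this.congr fun u _ => hlam u
  obtain ⟨F, hF⟩ := exists_hasDerivAt_of_continuousOn_Ici
    (g := fun u => lam u ^ 2 / b u) (a := u₀)
    (ContinuousOn.div (by fun_prop) hbc fun u hu => (hb u hu).ne')
  have hdexp : ∀ a u : ℝ, HasDerivAt (fun u => Real.exp (-a * u)) (-a * Real.exp (-a * u)) u := by
    intro a u
    have h1 : HasDerivAt (fun x => -a * x) (-a) u := by
      simpa using (hasDerivAt_id u).const_mul (-a)
    exact h1.exp.congr_deriv (by ring)
  have hFd : ∀ u, u₀ ≤ u → HasDerivAt (fun u => F u + K⁻¹ * Y u)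
      (α / (2 * βinf) * Y u * (fb u * (fβ u)⁻¹ * (fβ u)⁻¹ - 1)) u := by
    intro u hu
    refine ((hF u hu).add ((hdexp (1 + α) u).const_mul K⁻¹)).congr_deriv ?_
    rw [hheq u hu]
    change _ + K⁻¹ * (-(1 + α) * Y u) = _
    rw [hK]
    field_simp
    ring
  obtain ⟨D, hD0, hD⟩ := hh1.exists_pos
  obtain ⟨u₁, hu₁⟩ := eventually_atTop.1 (hD.bound.and hge)
  have hYX : ∀ u, Y u * X u ^ 2 = Real.exp (-(3 - α) * u) := by
    intro u
    simp only [hX, hY]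
    rw [← Real.exp_nat_mul, ← Real.exp_add]
    push_cast
    ring_nf
  obtain ⟨l, hl, hlrate⟩ := exists_limit_of_abs_deriv_le_exp (a := u₁)
    (C := α / (2 * βinf) * D) (c := 3 - α) (by linarith)
    (fun u hu => hFd u (hu₁ u hu).2) (fun u hu => by
      have h1 := (hu₁ u hu).1
      rw [Real.norm_eq_abs, Real.norm_eq_abs, abs_of_pos (pow_pos (hXpos u) 2)] at h1
      have hy := hYpos u
      rw [abs_mul, abs_of_pos (by positivity), ← hYX u]
      calc _ ≤ α / (2 * βinf) * Y u * (D * X u ^ 2) := by gcongr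
        _ = _ := by ring)
  set T : ℝ → ℝ := fun u => F u - l with hT
  have hTd : ∀ u, u₀ ≤ u → HasDerivAt T (lam u ^ 2 / b u) u := fun u hu => (hF u hu).sub_const l
  have hT0 : Tendsto T atTop (𝓝 0) := by
    have h1 : Tendsto (fun u => K⁻¹ * Y u) atTop (𝓝 0) := by
      have h2 := (hexpneg hα1').const_mul K⁻¹
      rwa [mul_zero] at h2
    have h2 := (hl.sub h1).sub_const l
    simp only [sub_zero, sub_self] at h2
    refine h2.congr fun u => ?_
    simp only [hT]; ring
  have hTneg : ∀ u, u₀ ≤ u → T u < 0 :=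
    (exists_inverse_of_deriv_pos_of_tendsto_zero hTd (fun u hu => by
      have h1 := hb u hu
      have h2 := hz u hu
      rw [hlam]
      positivity) hT0).2.1
  set fT : ℝ → ℝ := fun u => K * |T u| / Y u with hfT
  have hfT1 : (fun u => fT u - 1) =O[atTop] fun u => X u ^ 2 := by
    refine IsBigO.of_bound (K * (α / (2 * βinf) * D / (3 - α))) ?_
    filter_upwards [hge, eventually_ge_atTop u₁] with u hu hu'
    have h1 := hlrate u hu'
    rw [← hYX u] at h1
    have hy := hYpos u
    have h2 : fT u - 1 = -(K * (F u + K⁻¹ * Y u - l) / Y u) := by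
      simp only [hfT]
      rw [abs_of_neg (hTneg u hu)]
      simp only [hT]
      field_simp
      ring
    rw [h2, norm_neg, Real.norm_eq_abs, Real.norm_eq_abs, abs_div, abs_mul,
      abs_of_pos (pow_pos (hXpos u) 2), abs_of_pos hK0, abs_of_pos hy, div_le_iff₀ hy]
    calc K * |F u + K⁻¹ * Y u - l|
        ≤ K * (α / (2 * βinf) * D / (3 - α) * (Y u * X u ^ 2)) := by gcongr
      _ = _ := by ring
  have hfTpos : ∀ u, u₀ ≤ u → 0 < fT u := fun u hu =>
    div_pos (mul_pos hK0 (abs_pos.2 (hTneg u hu).ne)) (hYpos u)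
  have hTpow : ∀ p u, u₀ ≤ u → K ^ p * |T u| ^ p = Real.exp (-((1 + α) * p) * u) * fT u ^ p := by
    intro p u hu
    have h1 : K * |T u| = Y u * fT u := by
      simp only [hfT]
      have := (hYpos u).ne'
      field_simp
    rw [← Real.mul_rpow hK0.le (abs_nonneg _), h1, Real.mul_rpow (hYpos u).le (hfTpos u hu).le]
    simp only [hY]
    rw [← Real.exp_mul]
    ring_nf
  -- comparison of exponentials with powers of the time
  have hYT : Y =O[atTop] fun u => |T u| := by
    have h1 : Tendsto fT atTop (𝓝 1) := by simpa using (hfT1.trans_tendsto hw).add_const 1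
    refine IsBigO.of_bound (2 * K) ?_
    filter_upwards [h1.eventually (lt_mem_nhds (by norm_num : (1 / 2 : ℝ) < 1))] with u hu
    simp only [hfT] at hu
    rw [lt_div_iff₀ (hYpos u)] at hu
    rw [Real.norm_eq_abs, Real.norm_eq_abs, abs_abs, abs_of_pos (hYpos u)]
    linarith
  have hexpT : ∀ p, 0 ≤ p →
      (fun u => Real.exp (-((1 + α) * p) * u)) =O[atTop] fun u => |T u| ^ p := by
    intro p hp
    refine (hYT.rpow hp (Eventually.of_forall fun u => abs_nonneg _)).congr_left fun u => ?_
    simp only [hY]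
    rw [← Real.exp_mul]
    ring_nf
  have hXq : ∀ u, Real.exp (-((1 + α) * q) * u) = X u := by
    intro u
    simp only [hX, hq]
    congr 1
    field_simp
  have hXT : X =O[atTop] fun u => |T u| ^ q := (hexpT q hq0.le).congr_left hXq
  have hX1 : X =O[atTop] fun _ => (1 : ℝ) := hX0.isBigO_one ℝ
  have hlog : (fun _ => (1 : ℝ)) =O[atTop] fun u => |Real.log (abs (T u))| := by
    have h1 : Tendsto (fun u => |T u|) atTop (𝓝[≠] 0) := by
      refine tendsto_nhdsWithin_iff.2 ⟨by simpa using hT0.abs, ?_⟩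
      filter_upwards [hge] with u hu
      exact abs_ne_zero.2 (hTneg u hu).ne
    have h2 : Tendsto (fun u => |Real.log (abs (T u))|) atTop atTop :=
      tendsto_abs_atBot_atTop.comp (Real.tendsto_log_nhdsNE_zero.comp h1)
    refine IsBigO.of_bound 1 ?_
    filter_upwards [h2.eventually_ge_atTop 1] with u hu
    simpa using hu
  have hX2 : (fun u => X u ^ 2) =O[atTop] fun u => |Real.log (abs (T u))| * |T u| ^ q := by
    have h1 : (fun u => X u ^ 2) =O[atTop] fun u => 1 * |T u| ^ q :=
      (hX1.mul hXT).congr_left fun u => (sq (X u)).symm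
    exact h1.trans (hlog.mul (isBigO_refl _ _))
  have hcompare : ∀ {p : ℝ} {f : ℝ → ℝ} (g : ℝ → ℝ), 0 ≤ p →
      (fun u => g u - 1) =O[atTop] (fun u => X u ^ 2) →
      (f =ᶠ[atTop] fun u => Real.exp (-((1 + α) * p) * u) * (g u - fT u ^ p)) →
      f =O[atTop] fun u => |T u| ^ p * |Real.log (abs (T u))| * |T u| ^ q := by
    intro p f g hp hg hf
    have h1 : (fun u => g u - fT u ^ p) =O[atTop] fun u => X u ^ 2 :=
      (hg.sub (isBigO_rpow_sub_one p hfT1 hw)).congr_left fun u => by ring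
    refine (hf.trans_isBigO ((hexpT p hp).mul (h1.trans hX2))).congr_right fun u => ?_
    ring
  -- the phase
  obtain ⟨G, hG⟩ := exists_hasDerivAt_of_continuousOn_Ici
    (g := fun u => (1 + (βinf + z u) ^ 2) / b u) (a := u₀)
    (ContinuousOn.div (by fun_prop) hbc fun u hu => (hb u hu).ne')
  set A : ℝ := (1 + βinf ^ 2) * α / (2 * βinf) with hA
  have hA0 : 0 < A := by positivity
  set fγ : ℝ → ℝ := fun u => (1 + (βinf + z u) ^ 2) / (1 + βinf ^ 2) * (fb u)⁻¹ with hfγ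
  have hfγ1 : (fun u => fγ u - 1) =O[atTop] fun u => X u ^ 2 := by
    refine isBigO_mul_sub_one ?_ hfbinv hw
    have h1 : (fun u => 2 * βinf + z u) =O[atTop] fun _ => (1 : ℝ) :=
      ((hzO.trans_tendsto hw).const_add (2 * βinf)).isBigO_one ℝ
    have h2 : (fun u => z u * (2 * βinf + z u)) =O[atTop] fun u => X u ^ 2 := by
      simpa using hzO.mul h1
    refine (h2.const_mul_left (1 + βinf ^ 2)⁻¹).congr_left fun u => ?_
    field_simp
    ring
  have hGd : ∀ u, u₀ ≤ u → HasDerivAt (fun u => G u - A / (1 - α) * Real.exp (-(-(1 - α)) * u))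
      (A * (X u)⁻¹ * (fγ u - 1)) u := by
    intro u hu
    refine ((hG u hu).sub ((hdexp (-(1 - α)) u).const_mul (A / (1 - α)))).congr_deriv ?_
    have h1 : Real.exp (-(-(1 - α)) * u) = (X u)⁻¹ := by
      simp only [hX]; rw [← Real.exp_neg]; ring_nf
    have h2 := (hXpos u).ne'
    have h3 := (hb u hu).ne'
    rw [h1]
    simp only [hfγ, hfb, hA]
    field_simp
  have hGO : (fun u => G u - A / (1 - α) * (X u)⁻¹) =O[atTop] fun _ => (1 : ℝ) := by
    obtain ⟨E, hE0, hE⟩ := hfγ1.exists_pos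
    obtain ⟨u₂, hu₂⟩ := eventually_atTop.1 (hE.bound.and hge)
    obtain ⟨m, hm, -⟩ := exists_limit_of_abs_deriv_le_exp (a := u₂)
      (C := A * E) (c := 1 - α) hc
      (fun u hu => hGd u (hu₂ u hu).2) (fun u hu => by
        have h1 := (hu₂ u hu).1
        rw [Real.norm_eq_abs, Real.norm_eq_abs, abs_of_pos (pow_pos (hXpos u) 2)] at h1
        have hx := hXpos u
        rw [abs_mul, abs_of_pos (by positivity)]
        calc _ ≤ A * (X u)⁻¹ * (E * X u ^ 2) := by gcongr
          _ = A * E * X u := by field_simp)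
    refine (hm.isBigO_one ℝ).congr_left fun u => ?_
    have h1 : Real.exp (-(-(1 - α)) * u) = (X u)⁻¹ := by
      simp only [hX]; rw [← Real.exp_neg]; ring_nf
    rw [h1]
  have h2q : 2 / (1 + α) = 1 + q := by simp only [hq]; field_simp; ring
  have hKq : 2 * (1 - α) * βinf / α = K * q := by simp only [hq, hK]; field_simp
  rw [mul_one, hKq]
  refine ⟨T, G, hT0, hTd, hG, ?_, ?_, ?_, ?_, ?_⟩
  · have h1 := (hcompare fb hq0.le hfb1 EventuallyEq.rfl).const_mul_left (2 * βinf / α)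
    refine h1.congr' ?_ EventuallyEq.rfl
    filter_upwards [hge] with u hu
    have h2 := hTpow q u hu
    have h3 : b u = 2 * βinf / α * (X u * fb u) := by
      have := (hXpos u).ne'
      simp only [hfb]; field_simp
    rw [hXq] at h2 ⊢
    rw [h2q, Real.rpow_add hK0, Real.rpow_one, h3]
    have h4 : 1 / (1 + α) * (K * K ^ q) * |T u| ^ q = 2 * βinf / α * (K ^ q * |T u| ^ q) := by
      rw [show 2 * βinf / α = 1 / (1 + α) * K by simp only [hK]; field_simp]
      ring
    rw [h4, h2]
    ring
  · refine hcompare (fun u => fb u * (fβ u)⁻¹) (by positivity) hlam1 ?_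
    filter_upwards [hge] with u hu
    have h2 : Real.exp (-((1 + α) * (1 / (1 + α))) * u) = Real.exp (-u) := by
      congr 1; field_simp
    rw [hTpow _ u hu, hlameq u hu, h2]
    ring
  · refine hcompare (fun _ => 1) (by positivity) (by simpa using isBigO_zero _ _) ?_
    filter_upwards [hge] with u hu
    have h2 : Real.exp (-((1 + α) * (α / (1 + α))) * u) = Real.exp (-α * u) := by
      congr 1; field_simp
    rw [one_mul, hTpow _ u hu, h2]
    ring
  · refine (hzO.trans ((hexpT (2 * (1 - α) / (1 + α)) (by positivity)).congr_left fun u => ?_))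
    simp only [hX]
    rw [← Real.exp_nat_mul]
    congr 1
    push_cast
    field_simp
  · have h1 : (fun u => (X u)⁻¹ * (fT u ^ (-q) - 1)) =O[atTop] fun _ => (1 : ℝ) := by
      refine (((isBigO_refl (fun u => (X u)⁻¹) atTop).mul
        (isBigO_rpow_sub_one (-q) hfT1 hw)).congr_right fun u => ?_).trans hX1
      have := (hXpos u).ne'
      field_simp
    have h2 : (fun _ => (1 : ℝ)) =O[atTop] fun u => 1 + |Real.log (abs (T u))| := by
      refine IsBigO.of_bound 1 (Eventually.of_forall fun u => ?_)
      rw [norm_one, one_mul, Real.norm_of_nonneg (by positivity)]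
      exact le_add_of_nonneg_right (abs_nonneg _)
    refine ((hGO.sub (h1.const_mul_left (A / (1 - α)))).trans h2).congr' ?_ EventuallyEq.rfl
    filter_upwards [hge] with u hu
    have h3 := hTpow (-q) u hu
    have h4 : Real.exp (-((1 + α) * -q) * u) = (X u)⁻¹ := by
      rw [← hXq u, ← Real.exp_neg]; ring_nf
    rw [h4] at h3
    have h5 : -2 / (1 + α) = -1 + -q := by rw [neg_div, h2q]; ring
    have h6 : -(1 - α) / (1 + α) = -q := by rw [neg_div]
    have h7 : q ^ q * q ^ (-q) = 1 := by
      rw [← Real.rpow_add hq0, add_neg_cancel, Real.rpow_zero]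
    have h8 : (1 + βinf ^ 2) * (K * q)⁻¹ = A / (1 - α) := by
      rw [← hKq]; simp only [hA]; field_simp
    rw [h5, h6, Real.rpow_add (mul_pos hK0 hq0), Real.rpow_neg_one,
      Real.mul_rpow hK0.le hq0.le]
    have h9 : (1 + βinf ^ 2) * q ^ q * ((K * q)⁻¹ * (K ^ (-q) * q ^ (-q))) * |T u| ^ (-q)
        = (1 + βinf ^ 2) * (K * q)⁻¹ * (q ^ q * q ^ (-q)) * (K ^ (-q) * |T u| ^ (-q)) := by ring
    rw [h9, h7, h8, h3]
    ring

/-- integration of the exact modulation system, original time: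
for `0 < α < 1`, `β∞ > 0` and polynomials `P₁, P₂` of the indicated form, there exist
`t_e < 0` and `g∞ > 0` with `|g∞ - 1|` small, and a solution `(λ_e, b_e, β̃_e, r_e, γ_e)`
on `[t_e, 0)` of the system (written in the time `t`, with `ds/dt = 1/λ²`, so that
`λ_s/λ + b = λλ_t + b = P₁` gives `λ_t = (P₁ - b)/λ`, `r_s/λ + 2β = 0` gives
`r_t = -2β/λ`, `β̃_s = P₂` gives `β̃_t = P₂/λ²`, `γ_s = 1 + β²` gives
`γ_t = (1+β²)/λ²`, with `b = (2β/α)(λ/r)`, `β = β∞ + β̃`), satisfying the asymptotic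
blow-up laws of the collapsing ring regime as `t ↑ 0`. -/
theorem stmt15 (α βinf : ℝ) (hα0 : 0 < α) (hα1 : α < 1) (hβ : 0 < βinf)
    (k : ℕ) (hk : 5 ≤ k) (c₁ c₂ : ℕ → ℕ → ℝ) (P₁ P₂ : ℝ → ℝ → ℝ)
    (hP₁ : ∀ b bt : ℝ, P₁ b bt =
      ∑ j ∈ Finset.range k, ∑ l ∈ Finset.range k,
        if 3 ≤ j + l ∧ j + l ≤ k - 1 then c₁ j l * b ^ j * bt ^ l else 0)
    (hP₂ : ∀ b bt : ℝ, P₂ b bt = -2 * b * bt +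
      ∑ j ∈ Finset.range k, ∑ l ∈ Finset.range k,
        if 3 ≤ j + l ∧ j + l ≤ k - 1 then c₂ j l * b ^ j * bt ^ l else 0) :
    ∃ (te ginf C : ℝ), te < 0 ∧ 0 < ginf ∧ |ginf - 1| ≤ 1 / 2 ∧ 0 < C ∧
      ∃ lam b bt r γ : ℝ → ℝ,
        (∀ t ∈ Set.Ico te (0 : ℝ), 0 < lam t ∧ 0 < r t) ∧
        (∀ t ∈ Set.Ico te (0 : ℝ), b t = 2 * (βinf + bt t) / α * (lam t / r t)) ∧
        (∀ t ∈ Set.Ico te (0 : ℝ),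
          HasDerivAt lam ((P₁ (b t) (bt t) - b t) / lam t) t) ∧
        (∀ t ∈ Set.Ico te (0 : ℝ),
          HasDerivAt r (-2 * (βinf + bt t) / lam t) t) ∧
        (∀ t ∈ Set.Ico te (0 : ℝ),
          HasDerivAt bt (P₂ (b t) (bt t) / lam t ^ 2) t) ∧
        (∀ t ∈ Set.Ico te (0 : ℝ),
          HasDerivAt γ ((1 + (βinf + bt t) ^ 2) / lam t ^ 2) t) ∧
        (∀ t ∈ Set.Ico te (0 : ℝ),
          |b t - 1 / (1 + α) * (2 * (1 + α) * βinf / (α * ginf)) ^ (2 / (1 + α))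
              * (abs t) ^ ((1 - α) / (1 + α))|
            ≤ C * (abs t) ^ ((1 - α) / (1 + α)) * |Real.log (abs t)|
                * (abs t) ^ ((1 - α) / (1 + α))) ∧
        (∀ t ∈ Set.Ico te (0 : ℝ),
          |lam t - (2 * (1 + α) * βinf / (α * ginf)) ^ (1 / (1 + α))
              * (abs t) ^ (1 / (1 + α))|
            ≤ C * (abs t) ^ (1 / (1 + α)) * |Real.log (abs t)|
                * (abs t) ^ ((1 - α) / (1 + α))) ∧
        (∀ t ∈ Set.Ico te (0 : ℝ),
          |r t - ginf * (2 * (1 + α) * βinf / (α * ginf)) ^ (α / (1 + α))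
              * (abs t) ^ (α / (1 + α))|
            ≤ C * (abs t) ^ (α / (1 + α)) * |Real.log (abs t)|
                * (abs t) ^ ((1 - α) / (1 + α))) ∧
        (∀ t ∈ Set.Ico te (0 : ℝ), |bt t| ≤ C * (abs t) ^ (2 * (1 - α) / (1 + α))) ∧
        (∀ t ∈ Set.Ico te (0 : ℝ),
          |γ t - (1 + βinf ^ 2) * ((1 - α) / (1 + α)) ^ ((1 - α) / (1 + α))
              * (2 * (1 - α) * βinf / (α * ginf)) ^ (-2 / (1 + α))
              * (abs t) ^ (-(1 - α) / (1 + α))|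
            ≤ C * (1 + |Real.log (abs t)|)) := by
  obtain ⟨u₀, C₀, b, z, hsol⟩ := exists_reduced_solution hα0 hα1 hβ hP₁ hP₂
  choose! hb hz hbd hzd hbas hzas using hsol
  set lam : ℝ → ℝ := fun u => α * b u * Real.exp (-α * u) / (2 * (βinf + z u)) with hlam
  obtain ⟨T, G, hT0, hT, hG, hOb, hOlam, hOr, hOz, hOG⟩ :=
    exists_time_phase_asymptotics hα0 hα1 hβ (lam := lam)
      (fun u hu => (hbd u hu).continuousAt.continuousWithinAt)
      (fun u hu => (hzd u hu).continuousAt.continuousWithinAt) hb hz (fun _ => rfl) hbas hzas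
  have hlampos : ∀ u, u₀ ≤ u → 0 < lam u := fun u hu => by
    have h1 := hb u hu
    have h2 := hz u hu
    simp only [hlam]
    positivity
  obtain ⟨hmono, hneg, U, hU⟩ := exists_inverse_of_deriv_pos_of_tendsto_zero hT
    (fun u hu => div_pos (pow_pos (hlampos u hu) 2) (hb u hu)) hT0
  have hrd : ∀ u : ℝ, HasDerivAt (fun u => Real.exp (-α * u)) (-α * Real.exp (-α * u)) u := by
    intro u
    have h1 : HasDerivAt (fun x => -α * x) (-α) u := by
      simpa using (hasDerivAt_id u).const_mul (-α)
    exact h1.exp.congr_deriv (by ring)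
  have hlamd : ∀ u, u₀ ≤ u →
      HasDerivAt lam (lam u * (P₁ (b u) (z u) - b u) / b u) u := by
    intro u hu
    have h1 := (hb u hu).ne'
    have h2 := (hz u hu).ne'
    refine ((((hbd u hu).const_mul α).mul (hrd u)).div
      (((hzd u hu).const_add βinf).const_mul 2) (mul_ne_zero two_ne_zero h2)).congr_deriv ?_
    simp only [hlam, Pi.mul_apply]
    field_simp
    ring
  obtain ⟨C₁, hC₁, h₁⟩ := hOb.exists_pos
  obtain ⟨C₂, hC₂, h₂⟩ := hOlam.exists_pos
  obtain ⟨C₃, hC₃, h₃⟩ := hOr.exists_pos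
  obtain ⟨C₄, hC₄, h₄⟩ := hOz.exists_pos
  obtain ⟨C₅, hC₅, h₅⟩ := hOG.exists_pos
  obtain ⟨u₁, hu₁⟩ := eventually_atTop.1 (h₁.bound.and (h₂.bound.and (h₃.bound.and
    (h₄.bound.and (h₅.bound.and (eventually_gt_atTop u₀))))))
  have hu₀₁ : u₀ < u₁ := (hu₁ u₁ le_rfl).2.2.2.2.2
  have hIoo : ∀ t ∈ Set.Ico (T u₁) 0, t ∈ Ioo (T u₀) 0 := fun t ht =>
    ⟨(hmono self_mem_Ici hu₀₁.le hu₀₁).trans_le ht.1, ht.2⟩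
  have hUge : ∀ t ∈ Set.Ico (T u₁) 0, u₁ ≤ U t := by
    intro t ht
    have h := hU t (hIoo t ht)
    rw [← hmono.le_iff_le hu₀₁.le h.1.le, h.2.1]
    exact ht.1
  have hU₀ : ∀ t ∈ Set.Ico (T u₁) 0, u₀ ≤ U t := fun t ht => (hU t (hIoo t ht)).1.le
  have hTU : ∀ t ∈ Set.Ico (T u₁) 0, T (U t) = t := fun t ht => (hU t (hIoo t ht)).2.1
  have hcomp : ∀ {f : ℝ → ℝ} {f' : ℝ}, ∀ t ∈ Set.Ico (T u₁) 0, HasDerivAt f f' (U t) →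
      HasDerivAt (fun t => f (U t)) (f' * (lam (U t) ^ 2 / b (U t))⁻¹) t := fun t ht hf =>
    hf.comp t (hU t (hIoo t ht)).2.2
  set C : ℝ := C₁ + C₂ + C₃ + C₄ + C₅ with hC
  have hbound : ∀ {x y D : ℝ}, D ≤ C → 0 ≤ y → ‖x‖ ≤ D * ‖y‖ → |x| ≤ C * y := by
    intro x y D hD hy h
    rw [Real.norm_of_nonneg hy] at h
    exact h.trans (mul_le_mul_of_nonneg_right hD hy)
  refine ⟨T u₁, 1, C, hneg u₁ hu₀₁.le, one_pos, by norm_num, by positivity,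
    fun t => lam (U t), fun t => b (U t), fun t => z (U t), fun t => Real.exp (-α * U t),
    fun t => G (U t), ?_, ?_, ?_, ?_, ?_, ?_, ?_, ?_, ?_, ?_, ?_⟩
  · exact fun t ht => ⟨hlampos _ (hU₀ t ht), Real.exp_pos _⟩
  · intro t ht
    have h2 := (hz _ (hU₀ t ht)).ne'
    simp only [hlam]
    field_simp
  · intro t ht
    have h1 := (hb _ (hU₀ t ht)).ne'
    have h2 := (hlampos _ (hU₀ t ht)).ne'
    refine (hcomp t ht (hlamd _ (hU₀ t ht))).congr_deriv ?_
    field_simp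
  · intro t ht
    have h1 := (hb _ (hU₀ t ht)).ne'
    have h2 := (hz _ (hU₀ t ht)).ne'
    refine (hcomp t ht (hrd (U t))).congr_deriv ?_
    simp only [hlam]
    field_simp
  · intro t ht
    have h1 := (hb _ (hU₀ t ht)).ne'
    have h2 := (hlampos _ (hU₀ t ht)).ne'
    refine (hcomp t ht (hzd _ (hU₀ t ht))).congr_deriv ?_
    field_simp
  · intro t ht
    have h1 := (hb _ (hU₀ t ht)).ne'
    have h2 := (hlampos _ (hU₀ t ht)).ne'
    refine (hcomp t ht (hG _ (hU₀ t ht))).congr_deriv ?_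
    field_simp
  · intro t ht
    have h := (hu₁ _ (hUge t ht)).1
    rw [hTU t ht] at h
    simpa only [mul_assoc] using hbound (by linarith) (by positivity) h
  · intro t ht
    have h := (hu₁ _ (hUge t ht)).2.1
    rw [hTU t ht] at h
    simpa only [mul_assoc] using hbound (by linarith) (by positivity) h
  · intro t ht
    have h := (hu₁ _ (hUge t ht)).2.2.1
    rw [hTU t ht] at h
    simpa only [mul_assoc] using hbound (by linarith) (by positivity) h
  · intro t ht
    have h := (hu₁ _ (hUge t ht)).2.2.2.1
    rw [hTU t ht] at h
    exact hbound (by linarith) (by positivity) h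
  · intro t ht
    have h := (hu₁ _ (hUge t ht)).2.2.2.2.1
    rw [hTU t ht] at h
    exact hbound (by linarith) (by positivity) h
end

section
/- (Stability of the modulation equations under O(b^k) perturbations.) Let 0 < α < 1, β∞ > 0, let P₁, P₂ be polynomials as in the construction (P₁ of total degree ≥ 3 in (b,β̃); P₂ = −2bβ̃ plus total degree ≥ 3 terms), and let k > 2/(1−α) + 1. Let t̄ < 0 be small enough and let (λ_e, b_e, β̃_e, r_e, γ_e) be the exact solution of the modulation system on [t_e, 0). Suppose (λ, b, β̃, r, γ) is defined for t ≤ t̄, satisfies (λ, b, β̃, r, γ)(t̄) = (λ_e, b_e, β̃_e, r_e, γ_e)(t̄), the constraint b = (2β/α)(λ/r) with β = β∞ + β̃, and the perturbed system λ_s/λ + b − P₁(b,β̃) = O(b^k), r_s/λ + 2β = O(b^k), β̃_s − P₂(b,β̃) = O(b^k), γ_s = 1 + β² + O(b^k) (with ds/dt = 1/λ²). Then there exists a universal time t̲ < t̄, independent of t̄, such that on [t̲, t̄]: b(t) = (1/(1+α))·(2(1+α)β∞/(α g∞))^{2/(1+α)}·|t|^{(1−α)/(1+α)}·(1 + O(log(|t|)·|t|^{(1−α)/(1+α)})),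 λ(t) = (2(1+α)β∞/(α g∞))^{1/(1+α)}·|t|^{1/(1+α)}·(1 + O(log(|t|)·|t|^{(1−α)/(1+α)})), r(t) = g∞·(2(1+α)β∞/(α g∞))^{α/(1+α)}·|t|^{α/(1+α)}·(1 + O(log(|t|)·|t|^{(1−α)/(1+α)})), β̃(t) = O(|t|^{2(1−α)/(1+α)}), and γ(t) = (1+β∞²)·((1−α)/(1+α))^{(1−α)/(1+α)}·(2(1−α)β∞/(α g∞))^{−2/(1+α)}·|t|^{−(1−α)/(1+α)} + O(log(|t|)). -/
open Set Filter Topology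

/-- A function on `[T, t₁] ⊆ (-∞, 0)` vanishing at `t₁` whose derivative is at most `B |t|^(κ-1)`
is at most `(B/κ) |T|^κ` at `T`. -/
lemma abs_le_of_abs_deriv_le_rpow {f f' : ℝ → ℝ} {T t₁ κ B : ℝ} (hT : T ≤ t₁) (ht₁ : t₁ < 0)
    (hκ : 0 < κ) (hB : 0 ≤ B) (hf : ∀ t ∈ Icc T t₁, HasDerivAt f (f' t) t)
    (hbound : ∀ t ∈ Ioo T t₁, |f' t| ≤ B * (-t) ^ (κ - 1)) (hzero : f t₁ = 0) :
    |f T| ≤ B / κ * (-T) ^ κ := by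
  have hg : ∀ t ∈ Icc T t₁, HasDerivAt (fun t => B / κ * (-t) ^ κ) (-(B * (-t) ^ (κ - 1))) t := by
    intro t ht
    have hneg : (-t) ≠ 0 := by linarith [ht.2]
    have h := ((hasDerivAt_neg t).rpow_const (p := κ) (Or.inl hneg)).const_mul (B / κ)
    exact h.congr_deriv (by field_simp)
  have hend : 0 ≤ B / κ * (-t₁) ^ κ := by
    have : 0 ≤ -t₁ := by linarith
    positivity
  have key : ∀ h h' : ℝ → ℝ, (∀ t ∈ Icc T t₁, HasDerivAt h (h' t) t) →
      (∀ t ∈ Ioo T t₁, h' t ≤ B * (-t) ^ (κ - 1)) → h t₁ = 0 →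
      -(B / κ * (-T) ^ κ) ≤ h T := by
    intro h h' hh hle h0
    have hanti : AntitoneOn (fun t => h t + B / κ * (-t) ^ κ) (Icc T t₁) := by
      refine antitoneOn_of_hasDerivWithinAt_nonpos (f' := fun t => h' t + -(B * (-t) ^ (κ - 1)))
        (convex_Icc T t₁) ?_ ?_ ?_
      · intro t ht
        exact ((hh t ht).add (hg t ht)).continuousAt.continuousWithinAt
      · intro t ht
        have ht' := interior_subset ht
        exact ((hh t ht').add (hg t ht')).hasDerivWithinAt
      · intro t ht
        rw [interior_Icc] at ht
        linarith [hle t ht]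
    have := hanti (left_mem_Icc.2 hT) (right_mem_Icc.2 hT) hT
    simp only [h0] at this
    linarith
  rw [abs_le]
  refine ⟨key f f' hf (fun t ht => (le_abs_self _).trans (hbound t ht)) hzero, ?_⟩
  have := key (fun t => -f t) (fun t => -f' t) (fun t ht => (hf t ht).neg)
    (fun t ht => (neg_le_abs _).trans (hbound t ht)) (by simp [hzero])
  linarith

/-- Bootstrap principle: if a family vanishing at `t₁ < 0` has derivatives `≤ κ mᵢ' |t|^(κ-1)`
with `mᵢ' < mᵢ` as long as it stays below `mᵢ |t|^κ`, then it stays below `mᵢ |t|^κ`. -/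
lemma abs_le_rpow_of_bootstrap {ι : Type*} [Finite ι] {f f' : ι → ℝ → ℝ} {T t₁ κ : ℝ}
    {m m' : ι → ℝ} (ht₁ : t₁ < 0) (hκ : 0 < κ) (hm' : ∀ i, 0 ≤ m' i) (hm : ∀ i, m' i < m i)
    (hf : ∀ i, ∀ t ∈ Icc T t₁, HasDerivAt (f i) (f' i t) t) (hzero : ∀ i, f i t₁ = 0)
    (hstep : ∀ t ∈ Icc T t₁, (∀ i, |f i t| ≤ m i * (-t) ^ κ) →
      ∀ i, |f' i t| ≤ κ * m' i * (-t) ^ (κ - 1)) :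
    ∀ t ∈ Icc T t₁, ∀ i, |f i t| ≤ m i * (-t) ^ κ := by
  set bad : Set ℝ := ⋃ i, {t | t ∈ Icc T t₁ ∧ m i * (-t) ^ κ ≤ |f i t|} with hbad
  have hclosed : ∀ i, IsClosed {t | t ∈ Icc T t₁ ∧ m i * (-t) ^ κ ≤ |f i t|} := by
    intro i
    refine isClosed_Icc.isClosed_le ?_ ?_
    · exact continuousOn_const.mul ((continuousOn_id.neg).rpow_const (fun _ _ => Or.inr hκ.le))
    · exact ContinuousOn.abs fun t ht => (hf i t ht).continuousAt.continuousWithinAt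
  have hcompact : IsCompact bad := by
    refine (isCompact_Icc (a := T) (b := t₁)).of_isClosed_subset
      (isClosed_iUnion_of_finite hclosed) ?_
    exact iUnion_subset fun i t ht => ht.1
  have hempty : ¬ bad.Nonempty := by
    intro hne
    obtain ⟨s, hs, hmax⟩ := hcompact.exists_isGreatest hne
    obtain ⟨i, hsI, hsi⟩ := mem_iUnion.1 hs
    have hgood : ∀ t ∈ Ioo s t₁, ∀ j, |f j t| ≤ m j * (-t) ^ κ := by
      intro t ht j
      by_contra hcon
      have : t ∈ bad := mem_iUnion.2 ⟨j, ⟨hsI.1.trans ht.1.le, ht.2.le⟩, (not_le.1 hcon).le⟩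
      exact absurd (hmax this) (not_le.2 ht.1)
    have hle := abs_le_of_abs_deriv_le_rpow (f := f i) (f' := f' i) (B := κ * m' i) hsI.2 ht₁ hκ
      (mul_nonneg hκ.le (hm' i)) (fun t ht => hf i t ⟨hsI.1.trans ht.1, ht.2⟩)
      (fun t ht => hstep t ⟨hsI.1.trans ht.1.le, ht.2.le⟩ (hgood t ht) i) (hzero i)
    rw [mul_div_cancel_left₀ _ hκ.ne'] at hle
    have hpos : 0 < (-s) ^ κ := Real.rpow_pos_of_pos (by linarith [hsI.2]) _
    nlinarith [hm i]
  intro t ht i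
  by_contra hcon
  exact hempty ⟨t, mem_iUnion.2 ⟨i, ht, (not_le.1 hcon).le⟩⟩

lemma abs_pow_sub_pow_le_of_abs_le {u v x : ℝ} (hu : |u| ≤ x) (hv : |v| ≤ x) (n : ℕ) :
    |u ^ n - v ^ n| ≤ n * x ^ (n - 1) * |u - v| := by
  calc |u ^ n - v ^ n| ≤ |u - v| * n * max |u| |v| ^ (n - 1) := abs_pow_sub_pow_le u v n
    _ ≤ |u - v| * n * x ^ (n - 1) := by gcongr; exact max_le hu hv
    _ = _ := by ring

lemma abs_monomial_sub_le {u v u' v' x : ℝ} {j l k : ℕ} (hu : |u| ≤ x) (hv : |v| ≤ x)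
    (hu' : |u'| ≤ x) (hv' : |v'| ≤ x) (hx : x ≤ 1) (hjl : 3 ≤ j + l) (hj : j ≤ k) (hl : l ≤ k) :
    |u ^ j * v ^ l - u' ^ j * v' ^ l| ≤ k * x ^ 2 * (|u - u'| + |v - v'|) := by
  have hx0 : 0 ≤ x := (abs_nonneg u).trans hu
  have e : u ^ j * v ^ l - u' ^ j * v' ^ l = (u ^ j - u' ^ j) * v ^ l + u' ^ j * (v ^ l - v' ^ l) := by
    ring
  have h1 : |(u ^ j - u' ^ j) * v ^ l| ≤ k * x ^ 2 * |u - u'| := by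
    rcases Nat.eq_zero_or_pos j with rfl | hjpos
    · simp; positivity
    rw [abs_mul, abs_pow]
    calc |u ^ j - u' ^ j| * |v| ^ l ≤ (j * x ^ (j - 1) * |u - u'|) * x ^ l := by
          gcongr; exact abs_pow_sub_pow_le_of_abs_le hu hu' j
      _ = j * x ^ (j - 1 + l) * |u - u'| := by rw [pow_add]; ring
      _ ≤ k * x ^ 2 * |u - u'| := by
          have := pow_le_pow_of_le_one hx0 hx (show 2 ≤ j - 1 + l by omega)
          gcongr
  have h2 : |u' ^ j * (v ^ l - v' ^ l)| ≤ k * x ^ 2 * |v - v'| := by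
    rcases Nat.eq_zero_or_pos l with rfl | hlpos
    · simp; positivity
    rw [abs_mul, abs_pow]
    calc |u'| ^ j * |v ^ l - v' ^ l| ≤ x ^ j * (l * x ^ (l - 1) * |v - v'|) := by
          gcongr; exact abs_pow_sub_pow_le_of_abs_le hv hv' l
      _ = l * x ^ (j + (l - 1)) * |v - v'| := by rw [pow_add]; ring
      _ ≤ k * x ^ 2 * |v - v'| := by
          have := pow_le_pow_of_le_one hx0 hx (show 2 ≤ j + (l - 1) by omega)
          gcongr
  rw [e]
  calc _ ≤ _ := abs_add_le _ _
    _ ≤ _ := add_le_add h1 h2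
    _ = _ := by ring

/-- A polynomial in two variables all of whose terms have degree between `3` and `k - 1`. -/
noncomputable def higherOrder (k : ℕ) (c : ℕ → ℕ → ℝ) (b w : ℝ) : ℝ :=
  ∑ j ∈ Finset.range k, ∑ l ∈ Finset.range k,
    if 3 ≤ j + l ∧ j + l ≤ k - 1 then c j l * b ^ j * w ^ l else 0

lemma higherOrder_zero (k : ℕ) (c : ℕ → ℕ → ℝ) : higherOrder k c 0 0 = 0 := by
  refine Finset.sum_eq_zero fun j _ => Finset.sum_eq_zero fun l _ => ?_
  split_ifs with h
  · rcases Nat.eq_zero_or_pos j with rfl | hj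
    · simp [show l ≠ 0 by omega]
    · simp [hj.ne']
  · rfl

/-- Lipschitz bound with constant `O(x²)` on the square of size `x ≤ 1`. -/
lemma exists_abs_higherOrder_sub_le (k : ℕ) (c : ℕ → ℕ → ℝ) :
    ∃ D : ℝ, 0 ≤ D ∧ ∀ x u v u' v' : ℝ, x ≤ 1 → |u| ≤ x → |v| ≤ x → |u'| ≤ x → |v'| ≤ x →
      |higherOrder k c u v - higherOrder k c u' v'| ≤ D * x ^ 2 * (|u - u'| + |v - v'|) := by
  refine ⟨∑ j ∈ Finset.range k, ∑ l ∈ Finset.range k, |c j l| * k, by positivity, ?_⟩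
  intro x u v u' v' hx hu hv hu' hv'
  have hx0 : 0 ≤ x := (abs_nonneg u).trans hu
  unfold higherOrder
  rw [← Finset.sum_sub_distrib, Finset.sum_mul, Finset.sum_mul]
  refine (Finset.abs_sum_le_sum_abs _ _).trans (Finset.sum_le_sum fun j hj => ?_)
  rw [← Finset.sum_sub_distrib, Finset.sum_mul, Finset.sum_mul]
  refine (Finset.abs_sum_le_sum_abs _ _).trans (Finset.sum_le_sum fun l hl => ?_)
  split_ifs with h
  · have := abs_monomial_sub_le hu hv hu' hv' hx h.1 (Finset.mem_range.1 hj).le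
      (Finset.mem_range.1 hl).le
    rw [show c j l * u ^ j * v ^ l - c j l * u' ^ j * v' ^ l
      = c j l * (u ^ j * v ^ l - u' ^ j * v' ^ l) by ring, abs_mul]
    calc _ ≤ |c j l| * (k * x ^ 2 * (|u - u'| + |v - v'|)) := by gcongr
      _ = _ := by ring
  · simp; positivity

lemma abs_exp_sub_one_le_mul {z N σ : ℝ} (hz : |z| ≤ N) (hN : N ≤ σ) (hσ : σ ≤ 1) :
    |Real.exp z - 1| ≤ (1 + σ) * N := by
  have h := Real.abs_exp_sub_one_sub_id_le (hz.trans (hN.trans hσ))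
  have h0 := abs_nonneg z
  calc |Real.exp z - 1| = |(Real.exp z - 1 - z) + z| := by ring_nf
    _ ≤ |Real.exp z - 1 - z| + |z| := abs_add_le _ _
    _ ≤ z ^ 2 + |z| := by gcongr
    _ = |z| * |z| + |z| := by rw [← sq, sq_abs]
    _ ≤ (1 + σ) * N := by nlinarith

lemma abs_log_sub_log_le {x y m : ℝ} (hm : 0 < m) (hx : m ≤ x) (hy : m ≤ y) :
    |Real.log x - Real.log y| ≤ 1 / m * |x - y| := by
  have key : ∀ x y : ℝ, m ≤ x → m ≤ y → Real.log x - Real.log y ≤ 1 / m * |x - y| := by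
    intro x y hx hy
    have hx0 := hm.trans_le hx
    have hy0 := hm.trans_le hy
    rw [← Real.log_div hx0.ne' hy0.ne']
    calc Real.log (x / y) ≤ x / y - 1 := Real.log_le_sub_one_of_pos (by positivity)
      _ = 1 / y * (x - y) := by field_simp
      _ ≤ 1 / y * |x - y| := by gcongr; exact le_abs_self _
      _ ≤ 1 / m * |x - y| := by gcongr
  rw [abs_le]
  refine ⟨?_, key x y hx hy⟩
  have := key y x hy hx
  rw [abs_sub_comm] at this
  linarith

lemma eq_mul_exp_of_constraint {α β βE lam lamE r rE b bE : ℝ} (hα : 0 < α) (hβ : 0 < β)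
    (hβE : 0 < βE) (hlam : 0 < lam) (hlamE : 0 < lamE) (hr : 0 < r) (hrE : 0 < rE)
    (hb : b = 2 * β / α * (lam / r)) (hbE : bE = 2 * βE / α * (lamE / rE)) :
    b = bE * Real.exp ((Real.log β - Real.log βE) + (Real.log lam - Real.log lamE)
        - (Real.log r - Real.log rE)) ∧
      b / lam ^ 2 = bE / lamE ^ 2 * Real.exp ((Real.log β - Real.log βE)
        - (Real.log lam - Real.log lamE) - (Real.log r - Real.log rE)) := by
  subst hb hbE
  simp only [Real.exp_sub, Real.exp_add, Real.exp_log, hβ, hβE, hlam, hlamE, hr, hrE]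
  constructor <;> field_simp

lemma one_div_sq_eq_mul_exp {lam lamE : ℝ} (hlam : 0 < lam) (hlamE : 0 < lamE) :
    1 / lam ^ 2 = 1 / lamE ^ 2 * Real.exp (-2 * (Real.log lam - Real.log lamE)) := by
  rw [show -2 * (Real.log lam - Real.log lamE)
    = Real.log lamE + Real.log lamE - Real.log lam - Real.log lam by ring]
  simp only [Real.exp_sub, Real.exp_add, Real.exp_log, hlam, hlamE]
  field_simp

lemma eq_mul_exp_log_sub_log {x y : ℝ} (hx : 0 < x) (hy : 0 < y) :
    x = y * Real.exp (Real.log x - Real.log y) := by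
  rw [Real.exp_sub, Real.exp_log hx, Real.exp_log hy]
  field_simp

lemma abs_sub_le_of_abs_log_sub_log_le {x y N : ℝ} (hx : 0 < x) (hy : 0 < y)
    (h : |Real.log x - Real.log y| ≤ N) (hN : N ≤ 1) : |x - y| ≤ 2 * y * N := by
  have h1 := abs_exp_sub_one_le_mul h hN le_rfl
  have h2 := eq_mul_exp_log_sub_log hx hy
  calc |x - y| = |y * (Real.exp (Real.log x - Real.log y) - 1)| := by
        congr 1; linear_combination h2
    _ = y * |Real.exp (Real.log x - Real.log y) - 1| := by rw [abs_mul, abs_of_pos hy]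
    _ ≤ y * ((1 + 1) * N) := by gcongr
    _ = _ := by ring

lemma one_div_sq_le_two_mul {lam lamE N : ℝ} (hlam : 0 < lam) (hlamE : 0 < lamE)
    (hμ : |Real.log lam - Real.log lamE| ≤ N) (hN : N ≤ 1 / 8) :
    1 / lam ^ 2 ≤ 2 * (1 / lamE ^ 2) ∧ |1 / lam ^ 2 - 1 / lamE ^ 2| ≤ 4 * N * (1 / lamE ^ 2) := by
  have h2 := one_div_sq_eq_mul_exp hlam hlamE
  have hz : |-2 * (Real.log lam - Real.log lamE)| ≤ 2 * N := by
    rw [abs_mul]; norm_num; exact hμ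
  have h1 := abs_exp_sub_one_le_mul hz (by linarith : 2 * N ≤ 1) le_rfl
  set e := Real.exp (-2 * (Real.log lam - Real.log lamE))
  have hp : 0 < 1 / lamE ^ 2 := by positivity
  rw [h2]
  constructor
  · nlinarith [(abs_le.1 h1).2]
  · rw [show 1 / lamE ^ 2 * e - 1 / lamE ^ 2 = 1 / lamE ^ 2 * (e - 1) by ring, abs_mul,
      abs_of_pos hp]
    nlinarith

/-- Difference of two quotients by comparable squares. -/
lemma abs_div_sq_sub_div_sq_le {S SE lam lamE N A₁ A₂ : ℝ} (hlam : 0 < lam) (hlamE : 0 < lamE)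
    (hμ : |Real.log lam - Real.log lamE| ≤ N) (hN : N ≤ 1 / 8) (hS : |S - SE| ≤ A₁ * N)
    (hSE : |SE| ≤ A₂) :
    |S / lam ^ 2 - SE / lamE ^ 2| ≤ (2 * A₁ + 4 * A₂) * N * (1 / lamE ^ 2) := by
  obtain ⟨h1, h2⟩ := one_div_sq_le_two_mul hlam hlamE hμ hN
  have hN0 : 0 ≤ N := (abs_nonneg _).trans hμ
  have hA2 : 0 ≤ A₂ := (abs_nonneg _).trans hSE
  have hA1 : 0 ≤ A₁ * N := (abs_nonneg _).trans hS
  calc |S / lam ^ 2 - SE / lamE ^ 2|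
      = |(S - SE) * (1 / lam ^ 2) + SE * (1 / lam ^ 2 - 1 / lamE ^ 2)| := by ring_nf
    _ ≤ |S - SE| * (1 / lam ^ 2) + |SE| * |1 / lam ^ 2 - 1 / lamE ^ 2| := by
        refine (abs_add_le _ _).trans ?_
        rw [abs_mul, abs_mul, abs_of_pos (by positivity : 0 < 1 / lam ^ 2)]
    _ ≤ A₁ * N * (2 * (1 / lamE ^ 2)) + A₂ * (4 * N * (1 / lamE ^ 2)) := by gcongr
    _ = _ := by ring

/-- Comparison of two states whose logarithmic distance is at most `N`. -/
lemma abs_sub_le_of_constraint {α βinf lam lamE r rE w wE b bE N σ : ℝ}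
    (hα : 0 < α) (hβinf : 0 < βinf) (hlam : 0 < lam) (hlamE : 0 < lamE) (hr : 0 < r)
    (hrE : 0 < rE) (hb : b = 2 * (βinf + w) / α * (lam / r))
    (hbE : bE = 2 * (βinf + wE) / α * (lamE / rE))
    (hw : βinf / 2 ≤ βinf + w) (hwE : βinf / 2 ≤ βinf + wE)
    (hN : |Real.log lam - Real.log lamE| + |Real.log r - Real.log rE|
      + (2 / βinf + 1) * |w - wE| ≤ N) (hNσ : N ≤ σ) (hσ : σ ≤ 1) :
    |b - bE| ≤ 2 * bE * N ∧
      |b / lam ^ 2 - bE / lamE ^ 2| ≤ (1 + σ) * (bE / lamE ^ 2) * N := by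
  have hβ0 : 0 < βinf + w := by linarith
  have hβE0 : 0 < βinf + wE := by linarith
  have hbE0 : 0 < bE := by rw [hbE]; positivity
  obtain ⟨e1, e2⟩ := eq_mul_exp_of_constraint hα hβ0 hβE0 hlam hlamE hr hrE hb hbE
  have hL := abs_log_sub_log_le (by positivity : 0 < βinf / 2) hw hwE
  have hd : βinf + w - (βinf + wE) = w - wE := by ring
  rw [hd, one_div_div] at hL
  have hdn := abs_nonneg (w - wE)
  set L := Real.log (βinf + w) - Real.log (βinf + wE)
  set μ := Real.log lam - Real.log lamE
  set ν := Real.log r - Real.log rE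
  have hz1 : |L + μ - ν| ≤ N := by
    have := abs_sub (L + μ) ν
    have := abs_add_le L μ
    nlinarith
  have hz2 : |L - μ - ν| ≤ N := by
    have := abs_sub (L - μ) ν
    have := abs_sub L μ
    nlinarith
  constructor
  · rw [e1, show bE * Real.exp (L + μ - ν) - bE = bE * (Real.exp (L + μ - ν) - 1) by ring, abs_mul,
      abs_of_pos hbE0]
    have := abs_exp_sub_one_le_mul hz1 (hNσ.trans hσ) le_rfl
    nlinarith
  · have hq : 0 < bE / lamE ^ 2 := by positivity
    rw [e2, show bE / lamE ^ 2 * Real.exp (L - μ - ν) - bE / lamE ^ 2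
      = bE / lamE ^ 2 * (Real.exp (L - μ - ν) - 1) by ring, abs_mul, abs_of_pos hq]
    have := abs_exp_sub_one_le_mul hz2 hNσ hσ
    calc _ ≤ bE / lamE ^ 2 * ((1 + σ) * N) := by gcongr
      _ = _ := by ring

/-- Difference of the higher order terms of the vector field at two nearby states. -/
lemma abs_higherOrder_div_sq_sub_le {k : ℕ} {c : ℕ → ℕ → ℝ} {D X b bE w wE lam lamE N : ℝ}
    (hD : 0 ≤ D) (hDk : ∀ x u v u' v' : ℝ, x ≤ 1 → |u| ≤ x → |v| ≤ x → |u'| ≤ x → |v'| ≤ x →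
      |higherOrder k c u v - higherOrder k c u' v'| ≤ D * x ^ 2 * (|u - u'| + |v - v'|))
    (hX0 : 0 ≤ X) (hX : X ≤ 1) (hlam : 0 < lam) (hlamE : 0 < lamE)
    (hμ : |Real.log lam - Real.log lamE| ≤ N) (hN : N ≤ 1 / 8)
    (hb : |b| ≤ X) (hbE : |bE| ≤ X) (hw : |w| ≤ X) (hwE : |wE| ≤ X)
    (hbb : |b - bE| ≤ N) (hww : |w - wE| ≤ N) :
    |higherOrder k c b w / lam ^ 2 - higherOrder k c bE wE / lamE ^ 2|
      ≤ 12 * D * X ^ 2 * N * (1 / lamE ^ 2) := by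
  have h1 : |higherOrder k c b w - higherOrder k c bE wE| ≤ 2 * D * X ^ 2 * N := by
    refine (hDk X b w bE wE hX hb hw hbE hwE).trans ?_
    calc _ ≤ D * X ^ 2 * (N + N) := by gcongr
      _ = _ := by ring
  have h2 : |higherOrder k c bE wE| ≤ 2 * D * X ^ 2 := by
    have := hDk X bE wE 0 0 hX hbE hwE (by simpa) (by simpa)
    rw [higherOrder_zero, sub_zero, sub_zero, sub_zero] at this
    refine this.trans ?_
    calc _ ≤ D * X ^ 2 * (1 + 1) := by gcongr <;> linarith
      _ = _ := by ring
  refine (abs_div_sq_sub_div_sq_le hlam hlamE hμ hN h1 h2).trans (le_of_eq ?_)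
  ring

/-- A state `(lam, r, w, b)` at logarithmic distance at most `N` from a reference state
`(lamE, rE, wE, bE)` having the size predicted by the blow-up laws at backward time `τ`, where `x`
stands for the size of `b`. -/
structure NearState (α βinf K x τ η N lam r w b lamE rE wE bE : ℝ) : Prop where
  alpha_pos : 0 < α
  beta_pos : 0 < βinf
  K_pos : 0 < K
  x_pos : 0 < x
  tau_pos : 0 < τ
  lam_pos : 0 < lam
  r_pos : 0 < r
  lamE_pos : 0 < lamE
  rE_pos : 0 < rE
  b_eq : b = 2 * (βinf + w) / α * (lam / r)
  bE_eq : bE = 2 * (βinf + wE) / α * (lamE / rE)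
  Kx_le_one : K * x ≤ 1
  Kx_le_beta : K * x ≤ βinf / 2
  bE_le : bE ≤ K * x / 2
  wE_le : |wE| ≤ K * x / 2
  sub_le : |w - wE| ≤ K * x / 2
  lamE_inv : 1 / lamE ^ 2 ≤ K / (x * τ)
  rate_le : bE / lamE ^ 2 ≤ (1 + η) / ((1 + α) * τ)
  dist_le : |Real.log lam - Real.log lamE| + |Real.log r - Real.log rE|
      + (2 / βinf + 1) * |w - wE| ≤ N
  N_le : N ≤ η
  eta_le : η ≤ 1 / 8

namespace NearState

variable {α βinf K x τ η N lam r w b lamE rE wE bE : ℝ}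

lemma N_nonneg
    (h : NearState α βinf K x τ η N lam r w b lamE rE wE bE) :
    0 ≤ N := by
  have := h.beta_pos
  exact le_trans (by positivity) h.dist_le

lemma abs_log_lam_le
    (h : NearState α βinf K x τ η N lam r w b lamE rE wE bE) :
    |Real.log lam - Real.log lamE| ≤ N := by
  have h1 := h.beta_pos
  have h2 : 0 ≤ (2 / βinf + 1) * |w - wE| := by positivity
  linarith [h.dist_le, abs_nonneg (Real.log r - Real.log rE)]

lemma abs_log_r_le
    (h : NearState α βinf K x τ η N lam r w b lamE rE wE bE) :
    |Real.log r - Real.log rE| ≤ N := by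
  have h1 := h.beta_pos
  have h2 : 0 ≤ (2 / βinf + 1) * |w - wE| := by positivity
  linarith [h.dist_le, abs_nonneg (Real.log lam - Real.log lamE)]

lemma abs_w_sub_le
    (h : NearState α βinf K x τ η N lam r w b lamE rE wE bE) :
    |w - wE| ≤ N := by
  have h1 := h.beta_pos
  have h2 : 0 ≤ 2 / βinf * |w - wE| := by positivity
  linarith [h.dist_le, abs_nonneg (Real.log lam - Real.log lamE),
    abs_nonneg (Real.log r - Real.log rE)]

lemma abs_w_le
    (h : NearState α βinf K x τ η N lam r w b lamE rE wE bE) :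
    |w| ≤ K * x := by
  have : |w| ≤ |w - wE| + |wE| := by simpa using abs_add_le (w - wE) wE
  linarith [h.sub_le, h.wE_le]

lemma beta_half_le
    (h : NearState α βinf K x τ η N lam r w b lamE rE wE bE) :
    βinf / 2 ≤ βinf + w := by
  linarith [(abs_le.1 h.abs_w_le).1, h.Kx_le_beta]

lemma betaE_half_le
    (h : NearState α βinf K x τ η N lam r w b lamE rE wE bE) :
    βinf / 2 ≤ βinf + wE := by
  have := mul_pos h.K_pos h.x_pos
  linarith [(abs_le.1 h.wE_le).1, h.Kx_le_beta]

lemma bE_pos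
    (h : NearState α βinf K x τ η N lam r w b lamE rE wE bE) :
    0 < bE := by
  have h1 := h.betaE_half_le
  have h2 := h.beta_pos
  have h3 : 0 < βinf + wE := by linarith
  have := h.lamE_pos
  have := h.rE_pos
  have := h.alpha_pos
  rw [h.bE_eq]
  positivity

lemma b_pos
    (h : NearState α βinf K x τ η N lam r w b lamE rE wE bE) :
    0 < b := by
  have h1 := h.beta_half_le
  have h2 := h.beta_pos
  have h3 : 0 < βinf + w := by linarith
  have := h.lam_pos
  have := h.r_pos
  have := h.alpha_pos
  rw [h.b_eq]
  positivity

lemma abs_b_sub_le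
    (h : NearState α βinf K x τ η N lam r w b lamE rE wE bE) :
    |b - bE| ≤ 2 * bE * N ∧
    |b / lam ^ 2 - bE / lamE ^ 2| ≤ (1 + η) * (bE / lamE ^ 2) * N :=
  abs_sub_le_of_constraint h.alpha_pos h.beta_pos h.lam_pos h.lamE_pos h.r_pos h.rE_pos h.b_eq
    h.bE_eq h.beta_half_le h.betaE_half_le h.dist_le h.N_le (by linarith [h.eta_le])

lemma N_le_eighth
    (h : NearState α βinf K x τ η N lam r w b lamE rE wE bE) :
    N ≤ 1 / 8 := h.N_le.trans h.eta_le

lemma b_le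
    (h : NearState α βinf K x τ η N lam r w b lamE rE wE bE) :
    b ≤ K * x := by
  have h1 := (abs_le.1 h.abs_b_sub_le.1).2
  have h2 := h.bE_pos
  nlinarith [h.N_le_eighth, h.bE_le]

/-- The size of an `O(b^k)` error after division by `lam²`. -/
lemma error_le
    (h : NearState α βinf K x τ η N lam r w b lamE rE wE bE)
    {C₁ : ℝ} (hC₁ : 0 ≤ C₁) (k : ℕ) :
    C₁ * b ^ k * (1 / lam ^ 2) ≤ 2 * C₁ * K ^ (k + 1) * (x ^ k / (x * τ)) := by
  have h1 := (one_div_sq_le_two_mul h.lam_pos h.lamE_pos h.abs_log_lam_le h.N_le_eighth).1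
  have h2 := h.b_pos
  have h3 := h.lam_pos
  calc C₁ * b ^ k * (1 / lam ^ 2) ≤ C₁ * (K * x) ^ k * (2 * (K / (x * τ))) := by
        have h4 : 1 / lam ^ 2 ≤ 2 * (K / (x * τ)) := by linarith [h.lamE_inv]
        have h5 := mul_pos h.K_pos h.x_pos
        have h6 := h.b_le
        gcongr
    _ = _ := by rw [mul_pow]; ring

lemma abs_rate_sub_le
    (h : NearState α βinf K x τ η N lam r w b lamE rE wE bE) :
    |b / lam ^ 2 - bE / lamE ^ 2| ≤ (1 + η) ^ 2 / ((1 + α) * τ) * N := by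
  have hη : 0 ≤ η := h.N_nonneg.trans h.N_le
  have hN := h.N_nonneg
  calc _ ≤ _ := h.abs_b_sub_le.2
    _ ≤ (1 + η) * ((1 + η) / ((1 + α) * τ)) * N := 
        mul_le_mul_of_nonneg_right (mul_le_mul_of_nonneg_left h.rate_le (by linarith)) hN
    _ = _ := by ring

lemma abs_higherOrder_sub_le
    (h : NearState α βinf K x τ η N lam r w b lamE rE wE bE)
    {k : ℕ} {c : ℕ → ℕ → ℝ} {D : ℝ} (hD : 0 ≤ D)
    (hDk : ∀ x u v u' v' : ℝ, x ≤ 1 → |u| ≤ x → |v| ≤ x → |u'| ≤ x → |v'| ≤ x →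
      |higherOrder k c u v - higherOrder k c u' v'| ≤ D * x ^ 2 * (|u - u'| + |v - v'|)) :
    |higherOrder k c b w / lam ^ 2 - higherOrder k c bE wE / lamE ^ 2|
      ≤ 12 * D * K ^ 3 * (x / τ) * N := by
  have hKx := mul_pos h.K_pos h.x_pos
  have hN := h.N_nonneg
  have hx := h.x_pos
  have hτ := h.tau_pos
  have hbb : |b - bE| ≤ N := by
    have := h.abs_b_sub_le.1
    nlinarith [h.bE_le, h.Kx_le_one]
  calc _ ≤ 12 * D * (K * x) ^ 2 * N * (1 / lamE ^ 2) :=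
        abs_higherOrder_div_sq_sub_le hD hDk hKx.le h.Kx_le_one h.lam_pos h.lamE_pos
          h.abs_log_lam_le h.N_le_eighth (by rw [abs_of_pos h.b_pos]; exact h.b_le)
          (by rw [abs_of_pos h.bE_pos]; linarith [h.bE_le]) h.abs_w_le (by linarith [h.wE_le])
          hbb h.abs_w_sub_le
    _ ≤ 12 * D * (K * x) ^ 2 * N * (K / (x * τ)) :=
        mul_le_mul_of_nonneg_left h.lamE_inv (by positivity)
    _ = _ := by field_simp

lemma abs_lam_rate_sub_le
    (h : NearState α βinf K x τ η N lam r w b lamE rE wE bE)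
    {k : ℕ} {c : ℕ → ℕ → ℝ} {D C₁ lam' : ℝ} (hD : 0 ≤ D)
    (hDk : ∀ x u v u' v' : ℝ, x ≤ 1 → |u| ≤ x → |v| ≤ x → |u'| ≤ x → |v'| ≤ x →
      |higherOrder k c u v - higherOrder k c u' v'| ≤ D * x ^ 2 * (|u - u'| + |v - v'|))
    (hC₁ : 0 ≤ C₁) (heq : |lam * lam' + b - higherOrder k c b w| ≤ C₁ * b ^ k) :
    |lam' / lam - (higherOrder k c bE wE - bE) / lamE / lamE|
      ≤ (1 + η) ^ 2 / ((1 + α) * τ) * N + 12 * D * K ^ 3 * (x / τ) * N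
        + 2 * C₁ * K ^ (k + 1) * (x ^ k / (x * τ)) := by
  have hl := h.lam_pos
  have hlE := h.lamE_pos
  have e : lam' / lam - (higherOrder k c bE wE - bE) / lamE / lamE
      = -(b / lam ^ 2 - bE / lamE ^ 2)
        + (higherOrder k c b w / lam ^ 2 - higherOrder k c bE wE / lamE ^ 2)
        + (lam * lam' + b - higherOrder k c b w) * (1 / lam ^ 2) := by
    field_simp
    ring
  rw [e]
  refine (abs_add_three _ _ _).trans ?_
  rw [abs_neg, abs_mul, abs_of_pos (by positivity : 0 < 1 / lam ^ 2)]
  refine add_le_add (add_le_add h.abs_rate_sub_le (h.abs_higherOrder_sub_le hD hDk)) ?_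
  exact le_trans (by gcongr) (h.error_le hC₁ k)

lemma abs_r_rate_sub_le
    (h : NearState α βinf K x τ η N lam r w b lamE rE wE bE)
    {k : ℕ} {C₁ r' : ℝ} (hα1 : α < 1)
    (hC₁ : 0 ≤ C₁) (heq : |lam * r' + 2 * (βinf + w)| ≤ C₁ * b ^ k) :
    |r' / r - -2 * (βinf + wE) / lamE / rE|
      ≤ α * ((1 + η) ^ 2 / ((1 + α) * τ) * N)
        + 2 * (C₁ / βinf) * K ^ (k + 1) * (x ^ k / (x * τ)) := by
  have hl := h.lam_pos
  have hlE := h.lamE_pos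
  have hr := h.r_pos
  have hrE := h.rE_pos
  have hα := h.alpha_pos
  have hβ := h.beta_pos
  have hb := h.b_pos
  have hw : 0 < βinf + w := by linarith [h.beta_half_le]
  have e : r' / r - -2 * (βinf + wE) / lamE / rE
      = -(α * (b / lam ^ 2 - bE / lamE ^ 2))
        + (lam * r' + 2 * (βinf + w)) * (α * b / (2 * (βinf + w)) * (1 / lam ^ 2)) := by
    rw [h.b_eq, h.bE_eq]
    field_simp
    ring
  have hfac : α * b / (2 * (βinf + w)) ≤ 1 / βinf := by
    rw [div_le_div_iff₀ (by positivity) hβ]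
    have h1 : b ≤ 1 := h.b_le.trans h.Kx_le_one
    have h2 : α * b ≤ 1 := by nlinarith
    nlinarith [h.beta_half_le]
  rw [e]
  refine (abs_add_le _ _).trans ?_
  rw [abs_neg, abs_mul, abs_mul, abs_of_pos hα,
    abs_of_pos (by positivity : 0 < α * b / (2 * (βinf + w)) * (1 / lam ^ 2))]
  refine add_le_add (mul_le_mul_of_nonneg_left h.abs_rate_sub_le hα.le) ?_
  calc _ ≤ C₁ * b ^ k * (1 / βinf * (1 / lam ^ 2)) := by gcongr
    _ = C₁ / βinf * b ^ k * (1 / lam ^ 2) := by ring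
    _ ≤ _ := h.error_le (by positivity) k

lemma abs_w_rate_sub_le
    (h : NearState α βinf K x τ η N lam r w b lamE rE wE bE)
    {k : ℕ} {c : ℕ → ℕ → ℝ} {D C₁ w' : ℝ} (hD : 0 ≤ D)
    (hDk : ∀ x u v u' v' : ℝ, x ≤ 1 → |u| ≤ x → |v| ≤ x → |u'| ≤ x → |v'| ≤ x →
      |higherOrder k c u v - higherOrder k c u' v'| ≤ D * x ^ 2 * (|u - u'| + |v - v'|))
    (hC₁ : 0 ≤ C₁)
    (heq : |lam ^ 2 * w' - (-2 * b * w + higherOrder k c b w)| ≤ C₁ * b ^ k) :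
    |w' - (-2 * bE * wE + higherOrder k c bE wE) / lamE ^ 2|
      ≤ 2 * (1 + η) / ((1 + α) * τ) * |w - wE| + (12 * D * K ^ 3 + 8 * K) * (x / τ) * N
        + 2 * C₁ * K ^ (k + 1) * (x ^ k / (x * τ)) := by
  have hl := h.lam_pos
  have hlE := h.lamE_pos
  have hα := h.alpha_pos
  have hτ := h.tau_pos
  have hx := h.x_pos
  have hK := h.K_pos
  have hN := h.N_nonneg
  have hη : 0 ≤ η := hN.trans h.N_le
  have e : w' - (-2 * bE * wE + higherOrder k c bE wE) / lamE ^ 2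
      = -(2 * (bE / lamE ^ 2) * (w - wE)) + -(2 * (b / lam ^ 2 - bE / lamE ^ 2) * w)
        + (higherOrder k c b w / lam ^ 2 - higherOrder k c bE wE / lamE ^ 2)
        + (lam ^ 2 * w' - (-2 * b * w + higherOrder k c b w)) * (1 / lam ^ 2) := by
    field_simp
    ring
  have t1 : |-(2 * (bE / lamE ^ 2) * (w - wE))| ≤ 2 * (1 + η) / ((1 + α) * τ) * |w - wE| := by
    have hq : 0 < bE / lamE ^ 2 := div_pos h.bE_pos (by positivity)
    rw [abs_neg, abs_mul, abs_mul, abs_of_pos hq, abs_two]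
    gcongr
    rw [mul_div_assoc]
    linarith [h.rate_le]
  have t2 : |-(2 * (b / lam ^ 2 - bE / lamE ^ 2) * w)| ≤ 8 * K * (x / τ) * N := by
    rw [abs_neg, abs_mul, abs_mul, abs_two]
    have h1 : (1 + η) ^ 2 / ((1 + α) * τ) ≤ 4 / τ := by
      have : (1 + η) ^ 2 ≤ 4 := by nlinarith [h.eta_le]
      have : τ ≤ (1 + α) * τ := by nlinarith
      gcongr
    calc _ ≤ 2 * (4 / τ * N) * (K * x) := by
          gcongr
          · exact h.abs_rate_sub_le.trans (by gcongr)
          · exact h.abs_w_le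
      _ = _ := by ring
  have t4 : |(lam ^ 2 * w' - (-2 * b * w + higherOrder k c b w)) * (1 / lam ^ 2)|
      ≤ 2 * C₁ * K ^ (k + 1) * (x ^ k / (x * τ)) := by
    rw [abs_mul, abs_of_pos (by positivity : 0 < 1 / lam ^ 2)]
    exact le_trans (by gcongr) (h.error_le hC₁ k)
  have t3 := h.abs_higherOrder_sub_le hD hDk
  rw [e]
  refine (abs_add_le _ _).trans ?_
  have := abs_add_three (-(2 * (bE / lamE ^ 2) * (w - wE)))
    (-(2 * (b / lam ^ 2 - bE / lamE ^ 2) * w))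
    (higherOrder k c b w / lam ^ 2 - higherOrder k c bE wE / lamE ^ 2)
  linarith

lemma abs_phase_rate_sub_le
    (h : NearState α βinf K x τ η N lam r w b lamE rE wE bE)
    {k : ℕ} {C₁ γ' : ℝ} (hC₁ : 0 ≤ C₁)
    (heq : |lam ^ 2 * γ' - (1 + (βinf + w) ^ 2)| ≤ C₁ * b ^ k) :
    |γ' - (1 + (βinf + wE) ^ 2) / lamE ^ 2|
      ≤ (2 * (2 * βinf + 2) + 4 * (1 + (βinf + 1) ^ 2)) * K * (N / (x * τ))
        + 2 * C₁ * K ^ (k + 1) * (x ^ k / (x * τ)) := by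
  have hl := h.lam_pos
  have hlE := h.lamE_pos
  have hN := h.N_nonneg
  have hβ := h.beta_pos
  have hwE : |wE| ≤ 1 := by
    linarith [h.wE_le, h.Kx_le_one, mul_pos h.K_pos h.x_pos]
  have hw := h.abs_w_le.trans h.Kx_le_one
  have e : γ' - (1 + (βinf + wE) ^ 2) / lamE ^ 2
      = ((1 + (βinf + w) ^ 2) / lam ^ 2 - (1 + (βinf + wE) ^ 2) / lamE ^ 2)
        + (lam ^ 2 * γ' - (1 + (βinf + w) ^ 2)) * (1 / lam ^ 2) := by
    field_simp
    ring
  have t0 : |(1 + (βinf + w) ^ 2) - (1 + (βinf + wE) ^ 2)| ≤ (2 * βinf + 2) * N := by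
    rw [show (1 + (βinf + w) ^ 2) - (1 + (βinf + wE) ^ 2) = (2 * βinf + w + wE) * (w - wE) by ring,
      abs_mul]
    gcongr
    · rw [abs_le]
      constructor <;> linarith [abs_le.1 hw, abs_le.1 hwE]
    · exact h.abs_w_sub_le
  have t00 : |1 + (βinf + wE) ^ 2| ≤ 1 + (βinf + 1) ^ 2 := by
    rw [abs_of_pos (by positivity)]
    nlinarith [abs_le.1 hwE]
  have t1 := abs_div_sq_sub_div_sq_le hl hlE h.abs_log_lam_le h.N_le_eighth t0 t00
  have t4 : |(lam ^ 2 * γ' - (1 + (βinf + w) ^ 2)) * (1 / lam ^ 2)|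
      ≤ 2 * C₁ * K ^ (k + 1) * (x ^ k / (x * τ)) := by
    rw [abs_mul, abs_of_pos (by positivity : 0 < 1 / lam ^ 2)]
    exact le_trans (by gcongr) (h.error_le hC₁ k)
  rw [e]
  refine (abs_add_le _ _).trans (add_le_add (t1.trans ?_) t4)
  calc _ ≤ (2 * (2 * βinf + 2) + 4 * (1 + (βinf + 1) ^ 2)) * N * (K / (x * τ)) :=
        mul_le_mul_of_nonneg_left h.lamE_inv (by positivity)
    _ = _ := by ring

end NearState

lemma tendsto_rpow_nhdsGT_zero {p : ℝ} (hp : 0 < p) :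
    Tendsto (fun τ : ℝ => τ ^ p) (𝓝[>] 0) (𝓝 0) := by
  have h := (Real.continuousAt_rpow_const 0 p (Or.inr hp.le)).tendsto
  rw [Real.zero_rpow hp.ne'] at h
  exact h.mono_left nhdsWithin_le_nhds

/-- A function with relative error `O(|log τ| τ^a)` has a leading coefficient. -/
lemma tendsto_div_rpow_of_abs_sub_le {f : ℝ → ℝ} {L p a C τ₀ : ℝ} (ha : 0 < a) (hτ₀ : 0 < τ₀)
    (hf : ∀ τ ∈ Ioc 0 τ₀, |f τ - L * τ ^ p| ≤ C * τ ^ p * |Real.log τ| * τ ^ a) :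
    Tendsto (fun τ => f τ / τ ^ p) (𝓝[>] 0) (𝓝 L) := by
  have hlim : Tendsto (fun τ : ℝ => C * |Real.log τ * τ ^ a|) (𝓝[>] 0) (𝓝 0) := by
    simpa using (tendsto_log_mul_rpow_nhdsGT_zero ha).abs.const_mul C
  rw [tendsto_iff_dist_tendsto_zero]
  refine squeeze_zero' (Eventually.of_forall fun _ => dist_nonneg) ?_ hlim
  filter_upwards [Ioc_mem_nhdsGT hτ₀] with τ hτ
  have hp : 0 < τ ^ p := Real.rpow_pos_of_pos hτ.1 p
  have ha' : 0 < τ ^ a := Real.rpow_pos_of_pos hτ.1 a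
  rw [Real.dist_eq, show f τ / τ ^ p - L = (f τ - L * τ ^ p) / τ ^ p by field_simp, abs_div,
    abs_of_pos hp, div_le_iff₀ hp, abs_mul, abs_of_pos ha']
  refine (hf τ hτ).trans (le_of_eq ?_)
  ring

/-- Uniform size bounds of the reference solution near the blow-up time. -/
lemma exists_reference_bounds {α a p p' B Λ R Ce η τ₀ : ℝ} {b lam r w : ℝ → ℝ} (hα : 0 < α)
    (ha : 0 < a) (hτ₀ : 0 < τ₀) (hη : 0 < η) (hB : 0 < B) (hΛ : 0 < Λ) (hR : 0 < R)
    (hCe : 0 < Ce) (hpa : 2 * p = 1 + a) (hBΛ : B / Λ ^ 2 = 1 / (1 + α))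
    (hlam : ∀ τ ∈ Ioc 0 τ₀, 0 < lam τ)
    (hbt : Tendsto (fun τ => b τ / τ ^ a) (𝓝[>] 0) (𝓝 B))
    (hlamt : Tendsto (fun τ => lam τ / τ ^ p) (𝓝[>] 0) (𝓝 Λ))
    (hrt : Tendsto (fun τ => r τ / τ ^ p') (𝓝[>] 0) (𝓝 R))
    (hw : ∀ τ ∈ Ioc 0 τ₀, |w τ| ≤ Ce * τ ^ (2 * a)) :
    ∃ K : ℝ, 0 < K ∧ ∀ᶠ τ in 𝓝[>] (0 : ℝ), b τ ≤ K * τ ^ a / 2 ∧ |w τ| ≤ K * τ ^ a / 2 ∧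
      1 / lam τ ^ 2 ≤ K / (τ ^ a * τ) ∧ b τ / lam τ ^ 2 ≤ (1 + η) / ((1 + α) * τ) ∧
      lam τ ≤ K * τ ^ p ∧ r τ ≤ K * τ ^ p' := by
  have hinv : Tendsto (fun τ => 1 / (lam τ / τ ^ p) ^ 2) (𝓝[>] 0) (𝓝 (1 / Λ ^ 2)) :=
    tendsto_const_nhds.div (hlamt.pow 2) (by positivity)
  have hrate : Tendsto (fun τ => (b τ / τ ^ a) / (lam τ / τ ^ p) ^ 2) (𝓝[>] 0)
      (𝓝 (1 / (1 + α))) := by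
    rw [← hBΛ]
    exact hbt.div (hlamt.pow 2) (by positivity)
  have hlt : 1 / (1 + α) < (1 + η) / (1 + α) := by gcongr; linarith
  refine ⟨4 * B + 2 * Λ + 2 * R + 2 * Ce + 2 * (1 / Λ ^ 2), by positivity, ?_⟩
  have hpos : 0 < 1 / Λ ^ 2 := by positivity
  filter_upwards [hbt.eventually_lt_const (show B < 2 * B by linarith),
    hlamt.eventually_lt_const (show Λ < 2 * Λ by linarith),
    hrt.eventually_lt_const (show R < 2 * R by linarith),
    hinv.eventually_lt_const (show 1 / Λ ^ 2 < 2 * (1 / Λ ^ 2) by linarith),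
    hrate.eventually_lt_const hlt, Ioc_mem_nhdsGT hτ₀, Ioc_mem_nhdsGT one_pos]
    with τ h1 h2 h3 h4 h5 hτ hτ1
  have hτ0 := hτ.1
  have xa : 0 < τ ^ a := Real.rpow_pos_of_pos hτ0 a
  have xp : 0 < τ ^ p := Real.rpow_pos_of_pos hτ0 p
  have xp' : 0 < τ ^ p' := Real.rpow_pos_of_pos hτ0 p'
  have hl := hlam τ hτ
  have hsq : (τ ^ p) ^ 2 = τ ^ a * τ := by
    rw [← Real.rpow_natCast, ← Real.rpow_mul hτ0.le, ← Real.rpow_add_one hτ0.ne']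
    congr 1
    push_cast
    linarith
  rw [div_lt_iff₀ xa] at h1
  rw [div_lt_iff₀ xp] at h2
  rw [div_lt_iff₀ xp'] at h3
  rw [div_pow, hsq] at h4 h5
  refine ⟨?_, ?_, ?_, ?_, ?_, ?_⟩
  · nlinarith
  · have h6 : τ ^ (2 * a) ≤ τ ^ a :=
      Real.rpow_le_rpow_of_exponent_ge hτ0 hτ1.2 (by linarith)
    have h7 := hw τ hτ
    nlinarith
  · rw [le_div_iff₀ (by positivity)]
    rw [one_div_div] at h4
    rw [one_div_mul_eq_div]
    linarith
  · rw [show (1 + η) / ((1 + α) * τ) = (1 + η) / (1 + α) / τ by rw [div_div],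
      le_div_iff₀ hτ0]
    refine le_trans (le_of_eq ?_) h5.le
    field_simp
  · nlinarith
  · nlinarith

/-- The smallness conditions on the backward time `τ` under which the bootstrap closes. -/
lemma eventually_small_backward_time {a κ K βinf ε M η C τ₀ : ℝ} (ha : 0 < a) (hκ : a < κ)
    (hK : 0 < K) (hβ : 0 < βinf) (hε : 0 < ε) (hη : 0 < η) (hτ₀ : 0 < τ₀) :
    ∀ᶠ τ in 𝓝[>] (0 : ℝ), τ ≤ τ₀ ∧ τ ≤ 1 ∧ 1 ≤ |Real.log τ| ∧ K * τ ^ a ≤ 1 ∧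
      K * τ ^ a ≤ βinf / 2 ∧ ε * M * τ ^ κ ≤ K * τ ^ a / 2 ∧ 3 * M * τ ^ κ ≤ η ∧
      3 * C * τ ^ a ≤ η * ε := by
  have hx := tendsto_rpow_nhdsGT_zero ha
  have hx' : ∀ c : ℝ, Tendsto (fun τ : ℝ => c * τ ^ a) (𝓝[>] 0) (𝓝 0) := fun c => by
    simpa using hx.const_mul c
  have hy : Tendsto (fun τ : ℝ => 3 * M * τ ^ κ) (𝓝[>] 0) (𝓝 0) := by
    simpa using (tendsto_rpow_nhdsGT_zero (ha.trans hκ)).const_mul (3 * M)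
  have hz : Tendsto (fun τ : ℝ => ε * M * τ ^ (κ - a)) (𝓝[>] 0) (𝓝 0) := by
    simpa using (tendsto_rpow_nhdsGT_zero (sub_pos.2 hκ)).const_mul (ε * M)
  filter_upwards [Ioc_mem_nhdsGT hτ₀, Ioc_mem_nhdsGT one_pos,
    Real.tendsto_log_nhdsGT_zero.eventually_le_atBot (-1),
    (hx' K).eventually_le_const one_pos, (hx' K).eventually_le_const (half_pos hβ),
    hz.eventually_le_const (half_pos hK), hy.eventually_le_const hη,
    (hx' (3 * C)).eventually_le_const (mul_pos hη hε)] with τ h1 h2 h3 h4 h5 h6 h7 h8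
  refine ⟨h1.2, h2.2, ?_, h4, h5, ?_, h7, h8⟩
  · rw [abs_of_nonpos (by linarith)]
    linarith
  · have hpos : 0 < τ ^ a := Real.rpow_pos_of_pos h1.1 a
    have e : τ ^ κ = τ ^ (κ - a) * τ ^ a := by
      rw [← Real.rpow_add h1.1]; congr 1; ring
    rw [e]
    nlinarith

/-- Bootstrap constants: the rates are strictly below the exponent `κ`. -/
lemma bootstrap_rates_lt {a κ η : ℝ} (ha : 0 < a) (ha1 : a ≤ 1) (hη : 0 < η) (hη8 : η ≤ 1 / 8)
    (hηκ : 10 * η ≤ κ - 1 - a) :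
    (1 + η) ^ 3 + 2 * η < κ ∧ (1 + η) * (1 + a) + 2 * η < κ := by
  constructor
  · have : (1 + η) ^ 3 ≤ 1 + 4 * η := by nlinarith [mul_pos hη hη]
    linarith
  · nlinarith

/-- Arithmetic of the bootstrap step: every rate stays below the corresponding target. -/
lemma bootstrap_step_bounds {α βinf a η ε M C₁ K D₁ D₂ x τ s d y₁ y₂ y₃ : ℝ} {k : ℕ}
    (hα0 : 0 < α) (hα1 : α < 1) (hβ : 0 < βinf) (haα : (1 + a) * (1 + α) = 2)
    (hη : 0 < η) (hη8 : η ≤ 1 / 8) (hε : 0 < ε) (hε1 : ε ≤ 1) (hM : 0 < M) (hC₁ : 0 < C₁)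
    (hK : 0 < K) (hD₁ : 0 ≤ D₁) (hD₂ : 0 ≤ D₂) (hx : 0 < x) (hτ0 : 0 < τ) (hs : 0 < s)
    (s5 : 3 * (12 * (D₁ + D₂) * K ^ 3 + 8 * K) * x ≤ η * ε)
    (hM1 : 2 * C₁ * K ^ (k + 1) + 2 * (C₁ / βinf) * K ^ (k + 1) ≤ η * M)
    (hM2 : 2 * C₁ * K ^ (k + 1) + 2 * (C₁ / βinf) * K ^ (k + 1) ≤ η * (ε * M))
    (hM3 : 2 * C₁ * K ^ (k + 1) + 2 * (C₁ / βinf) * K ^ (k + 1) ≤ η * (α * M))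
    (h3 : d ≤ ε * M * (s * τ))
    (e1 : y₁ ≤ (1 + η) ^ 2 / ((1 + α) * τ) * ((1 + α + η) * M * (s * τ))
      + 12 * D₁ * K ^ 3 * (x / τ) * ((1 + α + η) * M * (s * τ)) + 2 * C₁ * K ^ (k + 1) * s)
    (e2 : y₂ ≤ α * ((1 + η) ^ 2 / ((1 + α) * τ) * ((1 + α + η) * M * (s * τ)))
      + 2 * (C₁ / βinf) * K ^ (k + 1) * s)
    (e3 : y₃ ≤ 2 * (1 + η) / ((1 + α) * τ) * d
      + (12 * D₂ * K ^ 3 + 8 * K) * (x / τ) * ((1 + α + η) * M * (s * τ))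
      + 2 * C₁ * K ^ (k + 1) * s) :
    y₁ ≤ ((1 + η) ^ 3 + 2 * η) * M * s ∧ y₂ ≤ ((1 + η) ^ 3 + 2 * η) * (α * M) * s ∧
      y₃ ≤ ((1 + η) * (1 + a) + 2 * η) * (ε * M) * s := by
  set C₃ : ℝ := 2 * C₁ * K ^ (k + 1) + 2 * (C₁ / βinf) * K ^ (k + 1) with hC₃
  set C₄ : ℝ := 12 * (D₁ + D₂) * K ^ 3 + 8 * K with hC₄
  have m1 : (1 + η) ^ 2 / ((1 + α) * τ) * ((1 + α + η) * M * (s * τ))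
      ≤ (1 + η) ^ 3 * M * s := by
    have : (1 + α + η) / (1 + α) ≤ 1 + η := by
      rw [div_le_iff₀ (by linarith)]; nlinarith
    calc _ = (1 + η) ^ 2 * ((1 + α + η) / (1 + α)) * M * s := by field_simp
      _ ≤ (1 + η) ^ 2 * (1 + η) * M * s := by gcongr
      _ = _ := by ring
  have m2 : C₄ * (x / τ) * ((1 + α + η) * M * (s * τ)) ≤ η * ε * M * s := by
    calc _ = (1 + α + η) * C₄ * x * M * s := by field_simp
      _ ≤ 3 * C₄ * x * M * s := by gcongr; linarith
      _ ≤ _ := by gcongr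
  have m3 : 2 * C₁ * K ^ (k + 1) * s ≤ C₃ * s := by
    have : 0 ≤ 2 * (C₁ / βinf) * K ^ (k + 1) := by positivity
    gcongr
    linarith
  have m4 : 2 * (C₁ / βinf) * K ^ (k + 1) * s ≤ C₃ * s := by
    have : 0 ≤ 2 * C₁ * K ^ (k + 1) := by positivity
    gcongr
    linarith
  have hQ : 0 ≤ x / τ * ((1 + α + η) * M * (s * τ)) := by positivity
  have hηM : η * ε * M * s ≤ η * M * s := by
    have : η * ε * M * s = ε * (η * M * s) := by ring
    have : 0 < η * M * s := by positivity
    nlinarith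
  have m5 : 12 * D₁ * K ^ 3 * (x / τ) * ((1 + α + η) * M * (s * τ))
      ≤ C₄ * (x / τ) * ((1 + α + η) * M * (s * τ)) := by
    rw [mul_assoc, mul_assoc C₄]
    refine mul_le_mul_of_nonneg_right ?_ hQ
    have : 0 ≤ 12 * D₂ * K ^ 3 := by positivity
    linarith
  have m6 : (12 * D₂ * K ^ 3 + 8 * K) * (x / τ) * ((1 + α + η) * M * (s * τ))
      ≤ C₄ * (x / τ) * ((1 + α + η) * M * (s * τ)) := by
    rw [mul_assoc, mul_assoc C₄]
    refine mul_le_mul_of_nonneg_right ?_ hQ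
    have : 0 ≤ 12 * D₁ * K ^ 3 := by positivity
    linarith
  have m7 : 2 * (1 + η) / ((1 + α) * τ) * d
      ≤ (1 + η) * (1 + a) * (ε * M) * s := by
    calc _ ≤ 2 * (1 + η) / ((1 + α) * τ) * (ε * M * (s * τ)) := by gcongr
      _ = 2 / (1 + α) * (1 + η) * (ε * M) * s := by field_simp
      _ = _ := by
        rw [← haα]
        field_simp
  have n1 : C₃ * s ≤ η * M * s := by gcongr
  have n2 : C₃ * s ≤ η * (ε * M) * s := by gcongr
  have n3 : C₃ * s ≤ η * (α * M) * s := by gcongr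
  refine ⟨?_, ?_, ?_⟩
  · linarith
  · have : 0 ≤ η * (α * M) * s := by positivity
    have := mul_le_mul_of_nonneg_left m1 hα0.le
    linarith
  · linarith

/-- Backward propagation of `τ^κ`-closeness to the reference solution. -/
lemma exists_nearState {α βinf a κ C₁ : ℝ} {k : ℕ} {c₁ c₂ : ℕ → ℕ → ℝ} {te K η τ₁ : ℝ}
    {lamE bE wE rE : ℝ → ℝ} (hα0 : 0 < α) (hα1 : α < 1) (hβ : 0 < βinf) (hC₁ : 0 < C₁)
    (ha : a = (1 - α) / (1 + α)) (hκ : κ = a * k - a) (hK : 0 < K) (hη : 0 < η)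
    (hη8 : η ≤ 1 / 8) (hηκ : 10 * η ≤ κ - 1 - a) (hte : te < 0) (hτ₁ : 0 < τ₁)
    (hposE : ∀ t ∈ Ico te (0 : ℝ), 0 < lamE t ∧ 0 < rE t)
    (hbE : ∀ t ∈ Ico te (0 : ℝ), bE t = 2 * (βinf + wE t) / α * (lamE t / rE t))
    (hlamE : ∀ t ∈ Ico te (0 : ℝ),
      HasDerivAt lamE ((higherOrder k c₁ (bE t) (wE t) - bE t) / lamE t) t)
    (hrE : ∀ t ∈ Ico te (0 : ℝ), HasDerivAt rE (-2 * (βinf + wE t) / lamE t) t)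
    (hwE : ∀ t ∈ Ico te (0 : ℝ),
      HasDerivAt wE ((-2 * bE t * wE t + higherOrder k c₂ (bE t) (wE t)) / lamE t ^ 2) t)
    (hsize : ∀ τ ∈ Ioc 0 τ₁, bE (-τ) ≤ K * τ ^ a / 2 ∧ |wE (-τ)| ≤ K * τ ^ a / 2 ∧
      1 / lamE (-τ) ^ 2 ≤ K / (τ ^ a * τ) ∧
      bE (-τ) / lamE (-τ) ^ 2 ≤ (1 + η) / ((1 + α) * τ)) :
    ∃ τ₀ M : ℝ, 0 < τ₀ ∧ 0 < M ∧ τ₀ ≤ τ₁ ∧ τ₀ ≤ -te ∧ τ₀ ≤ 1 ∧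
      (∀ τ ∈ Ioc 0 τ₀, 1 ≤ |Real.log τ|) ∧
      ∀ tbar ∈ Ico (-τ₀) (0 : ℝ), ∀ lam b w r lam' r' w' : ℝ → ℝ,
        (∀ t ∈ Icc (-τ₀) tbar, 0 < lam t ∧ 0 < r t) →
        (∀ t ∈ Icc (-τ₀) tbar, b t = 2 * (βinf + w t) / α * (lam t / r t)) →
        (∀ t ∈ Icc (-τ₀) tbar, HasDerivAt lam (lam' t) t) →
        (∀ t ∈ Icc (-τ₀) tbar, HasDerivAt r (r' t) t) →
        (∀ t ∈ Icc (-τ₀) tbar, HasDerivAt w (w' t) t) →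
        (∀ t ∈ Icc (-τ₀) tbar,
          |lam t * lam' t + b t - higherOrder k c₁ (b t) (w t)| ≤ C₁ * b t ^ k) →
        (∀ t ∈ Icc (-τ₀) tbar, |lam t * r' t + 2 * (βinf + w t)| ≤ C₁ * b t ^ k) →
        (∀ t ∈ Icc (-τ₀) tbar,
          |lam t ^ 2 * w' t - (-2 * b t * w t + higherOrder k c₂ (b t) (w t))| ≤ C₁ * b t ^ k) →
        lam tbar = lamE tbar → w tbar = wE tbar → r tbar = rE tbar →
        ∀ t ∈ Icc (-τ₀) tbar, NearState α βinf K ((-t) ^ a) (-t) η (3 * M * (-t) ^ κ)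
          (lam t) (r t) (w t) (b t) (lamE t) (rE t) (wE t) (bE t) := by
  have ha0 : 0 < a := by rw [ha]; exact div_pos (by linarith) (by linarith)
  have ha1 : a ≤ 1 := by rw [ha, div_le_one (by linarith)]; linarith
  have haα : (1 + a) * (1 + α) = 2 := by rw [ha]; field_simp; ring
  have hκ0 : 0 < κ := by linarith
  obtain ⟨D₁, hD₁, hDk₁⟩ := exists_abs_higherOrder_sub_le k c₁
  obtain ⟨D₂, hD₂, hDk₂⟩ := exists_abs_higherOrder_sub_le k c₂
  set c : ℝ := 2 / βinf + 1 with hc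
  have hc1 : 1 < c := by have : 0 < 2 / βinf := by positivity
                         linarith
  set ε : ℝ := η / c with hεdef
  have hε : 0 < ε := by positivity
  have hcε : c * ε = η := by rw [hεdef]; field_simp
  have hε1 : ε ≤ 1 := by nlinarith
  set C₃ : ℝ := 2 * C₁ * K ^ (k + 1) + 2 * (C₁ / βinf) * K ^ (k + 1) with hC₃
  have hC₃0 : 0 < C₃ := by positivity
  set C₄ : ℝ := 12 * (D₁ + D₂) * K ^ 3 + 8 * K with hC₄
  have hC₄0 : 0 < C₄ := by positivity
  set M : ℝ := C₃ / (η * (ε * α)) with hMdef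
  have hM : 0 < M := by positivity
  have hC₃M : C₃ = η * (ε * α) * M := by rw [hMdef]; field_simp
  have hM1 : C₃ ≤ η * M := by
    have : ε * α ≤ 1 := by nlinarith
    rw [hC₃M]
    nlinarith [mul_pos hη hM]
  have hM2 : C₃ ≤ η * (ε * M) := by
    rw [hC₃M]
    nlinarith [mul_pos (mul_pos hη hM) hε]
  have hM3 : C₃ ≤ η * (α * M) := by
    rw [hC₃M]
    nlinarith [mul_pos (mul_pos hη hM) hα0]
  obtain ⟨u, hu, hsub⟩ := mem_nhdsGT_iff_exists_Ioc_subset.1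
    (eventually_small_backward_time (C := C₄) (τ₀ := min τ₁ (-te)) ha0 (by linarith : a < κ) hK hβ
      hε hη (lt_min hτ₁ (by linarith)))
  have hu0 : 0 < u := hu
  have hsub' := fun τ (hτ : τ ∈ Ioc 0 u) => hsub hτ
  obtain ⟨hu1, hu2, -⟩ := hsub' u ⟨hu0, le_rfl⟩
  refine ⟨u, M, hu0, hM, hu1.trans (min_le_left _ _), hu1.trans (min_le_right _ _), hu2,
    fun τ hτ => (hsub' τ hτ).2.2.1, ?_⟩
  intro tbar htbar lam b w r lam' r' w' hpos hb hlam hr hw eqlam eqr eqw hlam0 hw0 hr0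
  have hIco : ∀ t ∈ Icc (-u) tbar, t ∈ Ico te 0 := fun t ht =>
    ⟨by linarith [ht.1, hu1.trans (min_le_right _ _)], by linarith [ht.2, htbar.2]⟩
  have hIoc : ∀ t ∈ Icc (-u) tbar, -t ∈ Ioc 0 u := fun t ht =>
    ⟨by linarith [ht.2, htbar.2], by linarith [ht.1]⟩
  -- the bootstrap assumption puts the two states close to each other
  have near : ∀ t ∈ Icc (-u) tbar, |Real.log (lam t) - Real.log (lamE t)| ≤ M * (-t) ^ κ →
      |Real.log (r t) - Real.log (rE t)| ≤ α * M * (-t) ^ κ →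
      |w t - wE t| ≤ ε * M * (-t) ^ κ → ∀ N, N ≤ 3 * M * (-t) ^ κ →
      (1 + α + η) * M * (-t) ^ κ ≤ N →
      NearState α βinf K ((-t) ^ a) (-t) η N
          (lam t) (r t) (w t) (b t) (lamE t) (rE t) (wE t) (bE t) := by
    intro t ht h1 h2 h3 N hN hN'
    have hτ := hIoc t ht
    obtain ⟨-, -, -, s1, s2, s3, s4, -⟩ := hsub' (-t) hτ
    obtain ⟨z1, z2, z3, z4⟩ := hsize (-t) ⟨hτ.1, hτ.2.trans (hu1.trans (min_le_left _ _))⟩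
    rw [neg_neg] at z1 z2 z3 z4
    exact
      { alpha_pos := hα0, beta_pos := hβ, K_pos := hK
        x_pos := Real.rpow_pos_of_pos hτ.1 a
        tau_pos := hτ.1
        lam_pos := (hpos t ht).1
        r_pos := (hpos t ht).2
        lamE_pos := (hposE t (hIco t ht)).1
        rE_pos := (hposE t (hIco t ht)).2
        b_eq := hb t ht
        bE_eq := hbE t (hIco t ht)
        Kx_le_one := s1
        Kx_le_beta := s2
        bE_le := z1
        wE_le := z2
        sub_le := h3.trans s3
        lamE_inv := z3
        rate_le := z4
        dist_le := by
          rw [← hc]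
          have h4 : c * |w t - wE t| ≤ η * (M * (-t) ^ κ) := by
            calc _ ≤ c * (ε * M * (-t) ^ κ) := by gcongr
              _ = (c * ε) * (M * (-t) ^ κ) := by ring
              _ = _ := by rw [hcε]
          linarith
        N_le := hN.trans s4
        eta_le := hη8 }
  obtain ⟨hr1, hr2⟩ := bootstrap_rates_lt ha0 ha1 hη hη8 hηκ
  have hboot := abs_le_rpow_of_bootstrap (T := -u) (t₁ := tbar) (κ := κ)
    (f := ![fun t => Real.log (lam t) - Real.log (lamE t),
      fun t => Real.log (r t) - Real.log (rE t), fun t => w t - wE t])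
    (f' := ![fun t => lam' t / lam t
        - (higherOrder k c₁ (bE t) (wE t) - bE t) / lamE t / lamE t,
      fun t => r' t / r t - -2 * (βinf + wE t) / lamE t / rE t,
      fun t => w' t - (-2 * bE t * wE t + higherOrder k c₂ (bE t) (wE t)) / lamE t ^ 2])
    (m := ![M, α * M, ε * M])
    (m' := ![((1 + η) ^ 3 + 2 * η) * M / κ, ((1 + η) ^ 3 + 2 * η) * (α * M) / κ,
      ((1 + η) * (1 + a) + 2 * η) * (ε * M) / κ])
    htbar.2 hκ0 ?_ ?_ ?_ ?_ ?_
  · simp only [Fin.forall_fin_succ, Matrix.cons_val_zero,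
      Matrix.cons_val_succ, IsEmpty.forall_iff, and_true] at hboot
    intro t ht
    obtain ⟨h1, h2, h3⟩ := hboot t ht
    have hp : 0 < (-t) ^ κ := Real.rpow_pos_of_pos (hIoc t ht).1 κ
    refine near t ht h1 h2 h3 _ le_rfl ?_
    gcongr
    linarith
  · simp only [Fin.forall_fin_succ, Matrix.cons_val_zero,
      Matrix.cons_val_succ, IsEmpty.forall_iff, and_true]
    refine ⟨?_, ?_, ?_⟩ <;> positivity
  · simp only [Fin.forall_fin_succ, Matrix.cons_val_zero,
      Matrix.cons_val_succ, IsEmpty.forall_iff, and_true]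
    refine ⟨?_, ?_, ?_⟩ <;> rw [div_lt_iff₀ hκ0, mul_comm _ κ] <;> gcongr
  · simp only [Fin.forall_fin_succ, Matrix.cons_val_zero,
      Matrix.cons_val_succ, IsEmpty.forall_iff, and_true]
    refine ⟨fun t ht => ?_, fun t ht => ?_, fun t ht => ?_⟩
    · exact ((hlam t ht).log (hpos t ht).1.ne').sub
        ((hlamE t (hIco t ht)).log (hposE t (hIco t ht)).1.ne')
    · exact ((hr t ht).log (hpos t ht).2.ne').sub
        ((hrE t (hIco t ht)).log (hposE t (hIco t ht)).2.ne')
    · exact (hw t ht).sub (hwE t (hIco t ht))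
  · simp [Fin.forall_fin_succ, hlam0, hr0, hw0]
  · simp only [Fin.forall_fin_succ, Matrix.cons_val_zero,
      Matrix.cons_val_succ, IsEmpty.forall_iff, and_true]
    rintro t ht ⟨h1, h2, h3⟩
    have hτ := hIoc t ht
    have hτ0 : 0 < -t := hτ.1
    obtain ⟨-, -, -, -, -, -, -, s5⟩ := hsub' (-t) hτ
    have hp : 0 < (-t) ^ κ := Real.rpow_pos_of_pos hτ0 κ
    have hx : 0 < (-t) ^ a := Real.rpow_pos_of_pos hτ0 a
    have hs : 0 < (-t) ^ (κ - 1) := Real.rpow_pos_of_pos hτ0 _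
    have hn := near t ht h1 h2 h3 ((1 + α + η) * M * (-t) ^ κ) (by gcongr; linarith) le_rfl
    have e1 := hn.abs_lam_rate_sub_le hD₁ hDk₁ hC₁.le (eqlam t ht)
    have e2 := hn.abs_r_rate_sub_le hα1 hC₁.le (eqr t ht)
    have e3 := hn.abs_w_rate_sub_le hD₂ hDk₂ hC₁.le (eqw t ht)
    have hpow : ((-t) ^ a) ^ k / ((-t) ^ a * (-t)) = (-t) ^ (κ - 1) := by
      rw [← Real.rpow_natCast, ← Real.rpow_mul hτ0.le, ← Real.rpow_add_one hτ0.ne',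
        ← Real.rpow_sub hτ0, hκ]
      congr 1
      ring
    have hpow' : (-t) ^ κ = (-t) ^ (κ - 1) * (-t) := by
      rw [← Real.rpow_add_one hτ0.ne']; congr 1; ring
    rw [hpow] at e1 e2 e3
    rw [hpow'] at e1 e2 e3 h3
    simp only [mul_div_cancel₀ _ hκ0.ne']
    exact bootstrap_step_bounds hα0 hα1 hβ haα hη hη8 hε hε1 hM hC₁ hK hD₁ hD₂ hx hτ0 hs s5 hM1 hM2 hM3
      h3 e1 e2 e3

/-- Transfer of an asymptotic law with relative error `O(|log τ| τ^a)` to a nearby function. -/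
lemma abs_sub_le_of_abs_sub_reference_le {y yE L Y C C' Ce l xa xκ : ℝ} (hY : 0 ≤ Y)
    (hC' : 0 ≤ C') (hl : 1 ≤ l) (hxa : 0 ≤ xa) (hκa : xκ ≤ xa) (hC : Ce + C' ≤ C)
    (h : |y - yE| ≤ C' * Y * xκ) (hE : |yE - L| ≤ Ce * Y * l * xa) :
    |y - L| ≤ C * Y * l * xa := by
  have hQ : 0 ≤ Y * xa := by positivity
  calc |y - L| ≤ |y - yE| + |yE - L| := abs_sub_le _ _ _
    _ ≤ C' * Y * xa + Ce * Y * l * xa := by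
        refine add_le_add (h.trans ?_) hE
        gcongr
    _ = C' * 1 * (Y * xa) + Ce * l * (Y * xa) := by ring
    _ ≤ C' * l * (Y * xa) + Ce * l * (Y * xa) := by gcongr
    _ = (Ce + C') * (Y * l * xa) := by ring
    _ ≤ C * (Y * l * xa) := by gcongr
    _ = _ := by ring

/-- stability of the modulation equations under `O(b^k)` perturbations:
let `0 < α < 1`, `β∞ > 0`, `k > 2/(1-α) + 1`, and let `(λ_e, b_e, β̃_e, r_e, γ_e)` be the
exact solution of the modulation system on `[t_e, 0)` with blow-up laws governed by
`g∞ > 0`, `|g∞ - 1|` small. Then there exist a universal backward time `t̲ < 0`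
(independent of `t̄`) and a constant `C` such that any solution of the perturbed system
(with `O(b^k)` errors, constant `C₁`), matching the exact solution at a small enough
time `t̄ < 0`, obeys the same asymptotic laws on `[t̲, t̄]`.
The system is written in the original time `t` (`ds/dt = 1/λ²`), so `λ_s/λ = λλ_t`,
`r_s/λ = λr_t`, `β̃_s = λ²β̃_t`, `γ_s = λ²γ_t`. -/
theorem stmt16 (α βinf : ℝ) (hα0 : 0 < α) (hα1 : α < 1) (hβ : 0 < βinf)
    (k : ℕ) (hk : 2 / (1 - α) + 1 < (k : ℝ))
    (c₁ c₂ : ℕ → ℕ → ℝ) (P₁ P₂ : ℝ → ℝ → ℝ)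
    (hP₁ : ∀ b bt : ℝ, P₁ b bt =
      ∑ j ∈ Finset.range k, ∑ l ∈ Finset.range k,
        if 3 ≤ j + l ∧ j + l ≤ k - 1 then c₁ j l * b ^ j * bt ^ l else 0)
    (hP₂ : ∀ b bt : ℝ, P₂ b bt = -2 * b * bt +
      ∑ j ∈ Finset.range k, ∑ l ∈ Finset.range k,
        if 3 ≤ j + l ∧ j + l ≤ k - 1 then c₂ j l * b ^ j * bt ^ l else 0)
    (te ginf : ℝ) (hte : te < 0) (hginf : 0 < ginf) (hginf1 : |ginf - 1| ≤ 1 / 2)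
    (lamE bE btE rE γE : ℝ → ℝ)
    -- the exact solution of the unperturbed modulation system on [t_e, 0):
    (hposE : ∀ t ∈ Set.Ico te (0 : ℝ), 0 < lamE t ∧ 0 < rE t)
    (hbE : ∀ t ∈ Set.Ico te (0 : ℝ), bE t = 2 * (βinf + btE t) / α * (lamE t / rE t))
    (hlamE : ∀ t ∈ Set.Ico te (0 : ℝ),
      HasDerivAt lamE ((P₁ (bE t) (btE t) - bE t) / lamE t) t)
    (hrE : ∀ t ∈ Set.Ico te (0 : ℝ), HasDerivAt rE (-2 * (βinf + btE t) / lamE t) t)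
    (hbtE : ∀ t ∈ Set.Ico te (0 : ℝ), HasDerivAt btE (P₂ (bE t) (btE t) / lamE t ^ 2) t)
    (hγE : ∀ t ∈ Set.Ico te (0 : ℝ),
      HasDerivAt γE ((1 + (βinf + btE t) ^ 2) / lamE t ^ 2) t)
    -- the exact solution obeys the asymptotic blow-up laws governed by g∞:
    (Ce : ℝ) (hCe : 0 < Ce)
    (hasymE : ∀ t ∈ Set.Ico te (0 : ℝ),
      |bE t - 1 / (1 + α) * (2 * (1 + α) * βinf / (α * ginf)) ^ (2 / (1 + α))
          * (abs t) ^ ((1 - α) / (1 + α))|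
        ≤ Ce * (abs t) ^ ((1 - α) / (1 + α)) * |Real.log (abs t)|
            * (abs t) ^ ((1 - α) / (1 + α)) ∧
      |lamE t - (2 * (1 + α) * βinf / (α * ginf)) ^ (1 / (1 + α))
          * (abs t) ^ (1 / (1 + α))|
        ≤ Ce * (abs t) ^ (1 / (1 + α)) * |Real.log (abs t)|
            * (abs t) ^ ((1 - α) / (1 + α)) ∧
      |rE t - ginf * (2 * (1 + α) * βinf / (α * ginf)) ^ (α / (1 + α))
          * (abs t) ^ (α / (1 + α))|
        ≤ Ce * (abs t) ^ (α / (1 + α)) * |Real.log (abs t)|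
            * (abs t) ^ ((1 - α) / (1 + α)) ∧
      |btE t| ≤ Ce * (abs t) ^ (2 * (1 - α) / (1 + α)) ∧
      |γE t - (1 + βinf ^ 2) * ((1 - α) / (1 + α)) ^ ((1 - α) / (1 + α))
          * (2 * (1 - α) * βinf / (α * ginf)) ^ (-2 / (1 + α))
          * (abs t) ^ (-(1 - α) / (1 + α))|
        ≤ Ce * (1 + |Real.log (abs t)|))
    -- the size of the O(b^k) errors in the perturbed system:
    (C₁ : ℝ) (hC₁ : 0 < C₁) :
    ∃ tun tbar0 C : ℝ, te ≤ tun ∧ tun < tbar0 ∧ tbar0 < 0 ∧ 0 < C ∧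
      ∀ tbar ∈ Set.Ico tbar0 (0 : ℝ),
      ∀ lam b bt r γ lam' r' bt' γ' : ℝ → ℝ,
        -- the perturbed solution on [t̲, t̄]: positivity, constraint, derivatives,
        (∀ t ∈ Set.Icc tun tbar, 0 < lam t ∧ 0 < r t ∧ 0 < b t) →
        (∀ t ∈ Set.Icc tun tbar, b t = 2 * (βinf + bt t) / α * (lam t / r t)) →
        (∀ t ∈ Set.Icc tun tbar, HasDerivAt lam (lam' t) t) →
        (∀ t ∈ Set.Icc tun tbar, HasDerivAt r (r' t) t) →
        (∀ t ∈ Set.Icc tun tbar, HasDerivAt bt (bt' t) t) →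
        (∀ t ∈ Set.Icc tun tbar, HasDerivAt γ (γ' t) t) →
        -- the perturbed modulation equations with O(b^k) right-hand sides,
        (∀ t ∈ Set.Icc tun tbar,
          |lam t * lam' t + b t - P₁ (b t) (bt t)| ≤ C₁ * b t ^ k) →
        (∀ t ∈ Set.Icc tun tbar,
          |lam t * r' t + 2 * (βinf + bt t)| ≤ C₁ * b t ^ k) →
        (∀ t ∈ Set.Icc tun tbar,
          |lam t ^ 2 * bt' t - P₂ (b t) (bt t)| ≤ C₁ * b t ^ k) →
        (∀ t ∈ Set.Icc tun tbar,
          |lam t ^ 2 * γ' t - (1 + (βinf + bt t) ^ 2)| ≤ C₁ * b t ^ k) →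
        -- matching the exact solution at time t̄,
        lam tbar = lamE tbar → b tbar = bE tbar → bt tbar = btE tbar →
        r tbar = rE tbar → γ tbar = γE tbar →
        -- conclusion: the same asymptotic laws on [t̲, t̄].
        ∀ t ∈ Set.Icc tun tbar,
          |b t - 1 / (1 + α) * (2 * (1 + α) * βinf / (α * ginf)) ^ (2 / (1 + α))
              * (abs t) ^ ((1 - α) / (1 + α))|
            ≤ C * (abs t) ^ ((1 - α) / (1 + α)) * |Real.log (abs t)|
                * (abs t) ^ ((1 - α) / (1 + α)) ∧
          |lam t - (2 * (1 + α) * βinf / (α * ginf)) ^ (1 / (1 + α))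
              * (abs t) ^ (1 / (1 + α))|
            ≤ C * (abs t) ^ (1 / (1 + α)) * |Real.log (abs t)|
                * (abs t) ^ ((1 - α) / (1 + α)) ∧
          |r t - ginf * (2 * (1 + α) * βinf / (α * ginf)) ^ (α / (1 + α))
              * (abs t) ^ (α / (1 + α))|
            ≤ C * (abs t) ^ (α / (1 + α)) * |Real.log (abs t)|
                * (abs t) ^ ((1 - α) / (1 + α)) ∧
          |bt t| ≤ C * (abs t) ^ (2 * (1 - α) / (1 + α)) ∧
          |γ t - (1 + βinf ^ 2) * ((1 - α) / (1 + α)) ^ ((1 - α) / (1 + α))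
              * (2 * (1 - α) * βinf / (α * ginf)) ^ (-2 / (1 + α))
              * (abs t) ^ (-(1 - α) / (1 + α))|
            ≤ C * (1 + |Real.log (abs t)|) := by
  have hP₁' : ∀ b w, P₁ b w = higherOrder k c₁ b w := hP₁
  have hP₂' : ∀ b w, P₂ b w = -2 * b * w + higherOrder k c₂ b w := hP₂
  simp only [hP₁'] at hlamE ⊢
  simp only [hP₂'] at hbtE ⊢
  have h1α : 0 < 1 + α := by linarith
  set a : ℝ := (1 - α) / (1 + α) with ha
  have ha0 : 0 < a := div_pos (by linarith) h1α
  have ha1 : a < 1 := by rw [ha, div_lt_one h1α]; linarith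
  have h2a : 2 * (1 - α) / (1 + α) = 2 * a := by rw [ha]; ring
  have hpa : 2 * (1 / (1 + α)) = 1 + a := by rw [ha]; field_simp; ring
  rw [h2a] at hasymE ⊢
  set A : ℝ := 2 * (1 + α) * βinf / (α * ginf) with hA
  have hA0 : 0 < A := by positivity
  set κ : ℝ := a * k - a with hκ
  have hκ1 : 1 + a < κ := by
    have h1 : 2 / (1 - α) * a = 1 + a := by
      have : 1 - α ≠ 0 := by linarith
      rw [← hpa, ha]; field_simp
    nlinarith
  obtain ⟨η, hη, hη8, hηκ⟩ : ∃ η : ℝ, 0 < η ∧ η ≤ 1 / 8 ∧ 10 * η ≤ κ - 1 - a :=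
    ⟨min (1 / 8) ((κ - 1 - a) / 10), lt_min (by norm_num) (by linarith), min_le_left _ _, by
      linarith [min_le_right (1 / 8 : ℝ) ((κ - 1 - a) / 10)]⟩
  have hmem : ∀ τ ∈ Ioc 0 (-te), -τ ∈ Ico te (0 : ℝ) := fun τ hτ =>
    ⟨by linarith [hτ.2], by linarith [hτ.1]⟩
  have habs : ∀ τ ∈ Ioc 0 (-te), |(-τ)| = τ := fun τ hτ => by rw [abs_neg, abs_of_pos hτ.1]
  obtain ⟨K, hK, hKev⟩ := exists_reference_bounds (α := α) (a := a) (p := 1 / (1 + α))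
    (p' := α / (1 + α)) (B := 1 / (1 + α) * A ^ (2 / (1 + α))) (Λ := A ^ (1 / (1 + α)))
    (R := ginf * A ^ (α / (1 + α))) (Ce := Ce) (η := η) (τ₀ := -te)
    (b := fun τ => bE (-τ)) (lam := fun τ => lamE (-τ)) (r := fun τ => rE (-τ))
    (w := fun τ => btE (-τ)) hα0 ha0 (by linarith) hη (by positivity) (by positivity)
    (by positivity) hCe hpa
    (by
      rw [← Real.rpow_natCast, ← Real.rpow_mul hA0.le]
      have e : 1 / (1 + α) * ((2 : ℕ) : ℝ) = 2 / (1 + α) := by push_cast; ring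
      have hne : A ^ (2 / (1 + α)) ≠ 0 := (Real.rpow_pos_of_pos hA0 _).ne'
      rw [e]
      field_simp)
    (fun τ hτ => (hposE _ (hmem τ hτ)).1)
    (tendsto_div_rpow_of_abs_sub_le ha0 (by linarith : 0 < -te) fun τ hτ => by
      have := (hasymE _ (hmem τ hτ)).1
      rwa [habs τ hτ] at this)
    (tendsto_div_rpow_of_abs_sub_le ha0 (by linarith : 0 < -te) fun τ hτ => by
      have := (hasymE _ (hmem τ hτ)).2.1
      rwa [habs τ hτ] at this)
    (tendsto_div_rpow_of_abs_sub_le ha0 (by linarith : 0 < -te) fun τ hτ => by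
      have := (hasymE _ (hmem τ hτ)).2.2.1
      rwa [habs τ hτ] at this)
    (fun τ hτ => by
      have := (hasymE _ (hmem τ hτ)).2.2.2.1
      rwa [habs τ hτ] at this)
  obtain ⟨τ₁, hτ₁, hsize⟩ := mem_nhdsGT_iff_exists_Ioc_subset.1 hKev
  have hτ₁0 : 0 < τ₁ := hτ₁
  obtain ⟨τ₀, M, hτ₀, hM, hτ₀τ₁, hτ₀te, hτ₀1, hlog, hnear⟩ := exists_nearState (c₁ := c₁)
    (c₂ := c₂) hα0 hα1 hβ hC₁ ha hκ hK hη hη8 hηκ hte hτ₁0 hposE hbE hlamE hrE hbtE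
    fun τ hτ => ⟨(hsize hτ).1, (hsize hτ).2.1, (hsize hτ).2.2.1, (hsize hτ).2.2.2.1⟩
  set G : ℝ := (2 * (2 * βinf + 2) + 4 * (1 + (βinf + 1) ^ 2)) * K * (3 * M)
    + 2 * C₁ * K ^ (k + 1) with hG
  have hG0 : 0 < G := by positivity
  have hκa : 0 < κ - a := by linarith
  have hKM : 0 < K * M := by positivity
  have hGκ : 0 < G / (κ - a) := by positivity
  refine ⟨-τ₀, -τ₀ / 2, Ce + 6 * (K * M) + 3 * M + G / (κ - a), by linarith, by linarith,
    by linarith, by positivity, ?_⟩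
  intro tbar htbar lam b bt r γ lam' r' bt' γ' hpos hb hlam hr hbt hγ eqlam eqr eqbt eqγ
    hlam0 hb0 hbt0 hr0 hγ0 t ht
  have hns := hnear tbar ⟨by linarith [htbar.1], htbar.2⟩ lam b bt r lam' r' bt'
    (fun t ht => ⟨(hpos t ht).1, (hpos t ht).2.1⟩) hb hlam hr hbt eqlam eqr eqbt hlam0 hbt0 hr0
  have hIco : ∀ t ∈ Icc (-τ₀) tbar, t ∈ Ico te 0 := fun t ht =>
    ⟨by linarith [ht.1], by linarith [ht.2, htbar.2]⟩
  have hIoc : ∀ t ∈ Icc (-τ₀) tbar, -t ∈ Ioc 0 τ₀ := fun t ht =>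
    ⟨by linarith [ht.2, htbar.2], by linarith [ht.1]⟩
  have hγdiff : |γ t - γE t| ≤ G / (κ - a) := by
    have hτ0 := (hIoc t ht).1
    have h := abs_le_of_abs_deriv_le_rpow (f := fun t => γ t - γE t)
      (f' := fun t => γ' t - (1 + (βinf + btE t) ^ 2) / lamE t ^ 2) (κ := κ - a) (B := G) ht.2
      htbar.2 hκa hG0.le
      (fun u hu => (hγ u ⟨ht.1.trans hu.1, hu.2⟩).sub (hγE u (hIco u ⟨ht.1.trans hu.1, hu.2⟩)))
      (fun u hu => ?_) (by simp [hγ0])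
    · refine h.trans ?_
      have : (-t) ^ (κ - a) ≤ 1 :=
        Real.rpow_le_one hτ0.le ((hIoc t ht).2.trans hτ₀1) hκa.le
      nlinarith
    · have hu' : u ∈ Icc (-τ₀) tbar := ⟨ht.1.trans hu.1.le, hu.2.le⟩
      have hu0 := (hIoc u hu').1
      refine ((hns u hu').abs_phase_rate_sub_le hC₁.le (eqγ u hu')).trans ?_
      have e1 : 3 * M * (-u) ^ κ / ((-u) ^ a * (-u)) = 3 * M * (-u) ^ (κ - a - 1) := by
        rw [← Real.rpow_add_one hu0.ne', mul_div_assoc, ← Real.rpow_sub hu0]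
        congr 2
        ring
      have e2 : ((-u) ^ a) ^ k / ((-u) ^ a * (-u)) = (-u) ^ (κ - 1) := by
        rw [← Real.rpow_natCast, ← Real.rpow_mul hu0.le, ← Real.rpow_add_one hu0.ne',
          ← Real.rpow_sub hu0, hκ]
        congr 1
        ring
      have e3 : (-u) ^ (κ - 1) ≤ (-u) ^ (κ - a - 1) :=
        Real.rpow_le_rpow_of_exponent_ge hu0 ((hIoc u hu').2.trans hτ₀1) (by linarith)
      rw [e1, e2]
      calc _ ≤ (2 * (2 * βinf + 2) + 4 * (1 + (βinf + 1) ^ 2)) * K * (3 * M * (-u) ^ (κ - a - 1))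
            + 2 * C₁ * K ^ (k + 1) * (-u) ^ (κ - a - 1) := by gcongr
        _ = _ := by rw [hG]; ring
  have hn := hns t ht
  have hτ := hIoc t ht
  have hτ0 := hτ.1
  have hτ1 := hτ.2.trans hτ₀1
  obtain ⟨-, -, -, -, hlamK, hrK⟩ := hsize ⟨hτ0, hτ.2.trans hτ₀τ₁⟩
  simp only [neg_neg] at hlamK hrK
  have hl := hlog (-t) hτ
  obtain ⟨aE1, aE2, aE3, aE4, aE5⟩ := hasymE t (hIco t ht)
  rw [abs_of_neg (by linarith : t < 0)] at aE1 aE2 aE3 aE4 aE5 ⊢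
  have hxa : 0 < (-t) ^ a := Real.rpow_pos_of_pos hτ0 a
  have hxκ : 0 < (-t) ^ κ := Real.rpow_pos_of_pos hτ0 κ
  have hκa' : (-t) ^ κ ≤ (-t) ^ a :=
    Real.rpow_le_rpow_of_exponent_ge hτ0 hτ1 (by linarith)
  have hκ2a : (-t) ^ κ ≤ (-t) ^ (2 * a) :=
    Real.rpow_le_rpow_of_exponent_ge hτ0 hτ1 (by linarith)
  have hN1 : 3 * M * (-t) ^ κ ≤ 1 := hn.N_le_eighth.trans (by norm_num)
  have hp : 0 < (-t) ^ (1 / (1 + α)) := Real.rpow_pos_of_pos hτ0 _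
  have hp' : 0 < (-t) ^ (α / (1 + α)) := Real.rpow_pos_of_pos hτ0 _
  have hsum : Ce + 6 * (K * M) ≤ Ce + 6 * (K * M) + 3 * M + G / (κ - a) := by linarith
  have hKM6 : 0 ≤ 6 * (K * M) := by positivity
  refine ⟨?_, ?_, ?_, ?_, ?_⟩
  · refine abs_sub_le_of_abs_sub_reference_le hxa.le hKM6 hl hxa.le hκa' hsum ?_ aE1
    calc |b t - bE t| ≤ 2 * bE t * (3 * M * (-t) ^ κ) := hn.abs_b_sub_le.1
      _ ≤ 2 * (K * (-t) ^ a) * (3 * M * (-t) ^ κ) := by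
          have := hn.bE_le
          gcongr
          linarith [mul_pos hK hxa]
      _ = _ := by ring
  · refine abs_sub_le_of_abs_sub_reference_le hp.le hKM6 hl hxa.le hκa' hsum ?_ aE2
    calc |lam t - lamE t| ≤ 2 * lamE t * (3 * M * (-t) ^ κ) :=
          abs_sub_le_of_abs_log_sub_log_le hn.lam_pos hn.lamE_pos hn.abs_log_lam_le hN1
      _ ≤ 2 * (K * (-t) ^ (1 / (1 + α))) * (3 * M * (-t) ^ κ) := by gcongr
      _ = _ := by ring
  · refine abs_sub_le_of_abs_sub_reference_le hp'.le hKM6 hl hxa.le hκa' hsum ?_ aE3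
    calc |r t - rE t| ≤ 2 * rE t * (3 * M * (-t) ^ κ) :=
          abs_sub_le_of_abs_log_sub_log_le hn.r_pos hn.rE_pos hn.abs_log_r_le hN1
      _ ≤ 2 * (K * (-t) ^ (α / (1 + α))) * (3 * M * (-t) ^ κ) := by gcongr
      _ = _ := by ring
  · calc |bt t| ≤ |bt t - btE t| + |btE t| := by simpa using abs_add_le (bt t - btE t) (btE t)
      _ ≤ 3 * M * (-t) ^ (2 * a) + Ce * (-t) ^ (2 * a) :=
          add_le_add (hn.abs_w_sub_le.trans (by gcongr)) aE4
      _ = (Ce + 3 * M) * (-t) ^ (2 * a) := by ring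
      _ ≤ _ := mul_le_mul_of_nonneg_right (by linarith) (Real.rpow_nonneg hτ0.le _)
  · refine (abs_sub_le _ (γE t) _).trans ((add_le_add hγdiff aE5).trans ?_)
    have h1 : 0 ≤ (6 * (K * M) + 3 * M) * |Real.log (-t)| := by positivity
    have h2 : G / (κ - a) ≤ G / (κ - a) * |Real.log (-t)| := le_mul_of_one_le_right hGκ.le hl
    linarith
end
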